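/- arXiv:1704.07717 — 4 statements merged into one kernel-verified Lean document; each statement's English description precedes it below -/
import Mathlib

section
/- Let μ = μ₁×⋯×μₙ be a product measure on ℝⁿ where each μᵢ is given by dμᵢ(x) = φᵢ(x)dx with φᵢ:ℝ→[0,∞) positively decreasing. Let λ∈(0,1) and let A,B⊆ℝⁿ be non-empty weakly unconditional Lebesgue measurable sets such that (1−λ)A+λB is also measurable. Then μ((1−λ)A+λB)^{1/n} ≥ (1−λ)μ(A)^{1/n} + λμ(B)^{1/n}. -/
open MeasureTheory Set Metric Filter
open scoped ENNReal NNReal Topology Pointwise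

noncomputable section

/-- The `d`-convex combination `(1-λ)A ⋆_d λB` of two sets. -/
def starComb {Z : Type*} (d : Z → Z → ℝ) (lam : ℝ) (A B : Set Z) : Set Z :=
  {z | ∃ a ∈ A, ∃ b ∈ B, d z a = lam * d a b ∧ d z b = (1 - lam) * d a b}

/-- A distance is strictly intrinsic: closed balls of radii summing to the distance
between their centers intersect. -/
def StrictlyIntrinsicDist {Z : Type*} (d : Z → Z → ℝ) : Prop :=
  ∀ x y : Z, ∀ r₁ r₂ : ℝ, 0 ≤ r₁ → 0 ≤ r₂ → r₁ + r₂ = d x y →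
    ∃ z : Z, d z x ≤ r₁ ∧ d z y ≤ r₂

/-- The ℓ² (Euclidean) product metric on `X × Y`. -/
def rho {X Y : Type*} [PseudoMetricSpace X] [PseudoMetricSpace Y] (a b : X × Y) : ℝ :=
  Real.sqrt (dist a.1 b.1 ^ 2 + dist a.2 b.2 ^ 2)

/-- The ℓ² (Euclidean) metric on a finite product of copies of a metric space. -/
def rhoPi {ι : Type*} [Fintype ι] {X : Type*} [PseudoMetricSpace X] (a b : ι → X) : ℝ :=
  Real.sqrt (∑ i, dist (a i) (b i) ^ 2)

open Classical in
/-- The `p`-th mean `M_p(a,b,λ)` of `a, b ∈ [0,∞]`, for `p ∈ ℝ ∪ {±∞}`, with the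
convention that it vanishes whenever `a * b = 0`. -/
def Mp (p : EReal) (lam : ℝ) (a b : ℝ≥0∞) : ℝ≥0∞ :=
  if a = 0 ∨ b = 0 then 0
  else if p = ⊤ then max a b
  else if p = ⊥ then min a b
  else if p = 0 then a ^ (1 - lam) * b ^ lam
  else (ENNReal.ofReal (1 - lam) * a ^ p.toReal + ENNReal.ofReal lam * b ^ p.toReal) ^ (1 / p.toReal)

open Classical in
/-- The `p`-th mean `M_p(a,b,λ)` of nonnegative reals, with the zero convention. -/
def MpR (p : EReal) (lam a b : ℝ) : ℝ :=
  if a = 0 ∨ b = 0 then 0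
  else if p = ⊤ then max a b
  else if p = ⊥ then min a b
  else if p = 0 then a ^ (1 - lam) * b ^ lam
  else ((1 - lam) * a ^ p.toReal + lam * b ^ p.toReal) ^ (1 / p.toReal)

/-- `(X,d,μ)` satisfies `BM(p)`. -/
def SatisfiesBM {X : Type*} [MeasurableSpace X] (d : X → X → ℝ) (μ : Measure X)
    (p : EReal) : Prop :=
  ∀ lam : ℝ, lam ∈ Ioo (0:ℝ) 1 → ∀ A B C : Set X, A.Nonempty → B.Nonempty →
    MeasurableSet A → MeasurableSet B → MeasurableSet C →
    μ A ≠ 0 → μ B ≠ 0 → starComb d lam A B ⊆ C →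
    Mp p lam (μ A) (μ B) ≤ μ C

/-- `(X,d,μ)` satisfies the general (linear) inequality `B̄M(1)`:
`μ(C) ≥ (1-λ)μ(A) + λμ(B)` for all nonempty measurable `A, B, C` with
`C ⊇ (1-λ)A ⋆ λB`. -/
def SatisfiesBMbarLinear {X : Type*} [MeasurableSpace X] (d : X → X → ℝ)
    (μ : Measure X) : Prop :=
  ∀ lam : ℝ, lam ∈ Ioo (0:ℝ) 1 → ∀ A B C : Set X, A.Nonempty → B.Nonempty →
    MeasurableSet A → MeasurableSet B → MeasurableSet C →
    starComb d lam A B ⊆ C →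
    ENNReal.ofReal (1 - lam) * μ A + ENNReal.ofReal lam * μ B ≤ μ C

/-- `(X,d,μ)` satisfies the general inequality `B̄M(p)` for a real `p > 0`:
`μ(C) ≥ ((1-λ)μ(A)^p + λμ(B)^p)^{1/p}` for all nonempty measurable `A, B, C`
with `C ⊇ (1-λ)A ⋆ λB`. -/
def SatisfiesBMbarPos {X : Type*} [MeasurableSpace X] (d : X → X → ℝ) (μ : Measure X)
    (p : ℝ) : Prop :=
  ∀ lam : ℝ, lam ∈ Ioo (0:ℝ) 1 → ∀ A B C : Set X, A.Nonempty → B.Nonempty →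
    MeasurableSet A → MeasurableSet B → MeasurableSet C →
    starComb d lam A B ⊆ C →
    (ENNReal.ofReal (1 - lam) * μ A ^ p + ENNReal.ofReal lam * μ B ^ p) ^ (1/p) ≤ μ C

/-- `(X,d,μ)` satisfies the weighted inequality `BM(p,q)`:
`μ(C)^p ≥ (1-λ)^q μ(A)^p + λ^q μ(B)^p` for all nonempty measurable sets of positive
measure with `C ⊇ (1-λ)A ⋆ λB`. -/
def SatisfiesBMW {X : Type*} [MeasurableSpace X] (d : X → X → ℝ) (μ : Measure X)
    (p q : ℝ) : Prop :=
  ∀ lam : ℝ, lam ∈ Ioo (0:ℝ) 1 → ∀ A B C : Set X, A.Nonempty → B.Nonempty →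
    MeasurableSet A → MeasurableSet B → MeasurableSet C →
    μ A ≠ 0 → μ B ≠ 0 → starComb d lam A B ⊆ C →
    ENNReal.ofReal ((1 - lam) ^ q) * μ A ^ p + ENNReal.ofReal (lam ^ q) * μ B ^ p ≤ μ C ^ p

/-- `(X,d,μ)` satisfies the Prékopa–Leindler inequality `PL`. -/
def SatisfiesPL {X : Type*} [MeasurableSpace X] (d : X → X → ℝ) (μ : Measure X) : Prop :=
  ∀ lam : ℝ, lam ∈ Ioo (0:ℝ) 1 → ∀ f g h : X → ℝ≥0∞,
    Measurable f → Measurable g → Measurable h →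
    (∀ x y z : X, d z x = lam * d x y → d z y = (1 - lam) * d x y →
      f x ^ (1 - lam) * g y ^ lam ≤ h z) →
    (∫⁻ x, f x ∂μ) ^ (1 - lam) * (∫⁻ x, g x ∂μ) ^ lam ≤ ∫⁻ x, h x ∂μ

open Classical in
/-- `(X,d,μ)` satisfies the Borell–Brascamp–Lieb inequality `BBL(p,m)`. -/
def SatisfiesBBL {X : Type*} [MeasurableSpace X] (d : X → X → ℝ) (μ : Measure X)
    (p m : ℝ) : Prop :=
  ∀ lam : ℝ, lam ∈ Ioo (0:ℝ) 1 → ∀ f g h : X → ℝ≥0∞,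
    Measurable f → Measurable g → Measurable h →
    (∀ x y z : X, d z x = lam * d x y → d z y = (1 - lam) * d x y →
      Mp (p : EReal) lam (f x) (g y) ≤ h z) →
    Mp (if m * p + 1 = 0 then (⊥ : EReal) else ((p / (m * p + 1) : ℝ) : EReal)) lam
      (∫⁻ x, f x ∂μ) (∫⁻ x, g x ∂μ) ≤ ∫⁻ x, h x ∂μ

/-- `φ : ℝ → ℝ` is positively decreasing: `t ↦ φ(t)` and `t ↦ φ(-t)` are
non-increasing on `[0,∞)`. -/
def PositivelyDecreasing (φ : ℝ → ℝ) : Prop :=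
  (∀ s t : ℝ, 0 ≤ s → s ≤ t → φ t ≤ φ s) ∧ (∀ s t : ℝ, 0 ≤ s → s ≤ t → φ (-t) ≤ φ (-s))

/-- A set `A ⊆ ℝⁿ` is weakly unconditional. -/
def WeaklyUnconditional {n : ℕ} (A : Set (Fin n → ℝ)) : Prop :=
  ∀ x ∈ A, ∀ ε : Fin n → ℝ, (∀ i, ε i = 0 ∨ ε i = 1) → (fun i => ε i * x i) ∈ A

/-- A nonnegative function on a real vector space is `p`-concave. -/
def PConcaveFn {E : Type*} [AddCommGroup E] [Module ℝ E] (p : EReal) (φ : E → ℝ) : Prop :=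
  ∀ x y : E, ∀ lam : ℝ, lam ∈ Ioo (0:ℝ) 1 →
    MpR p lam (φ x) (φ y) ≤ φ ((1 - lam) • x + lam • y)

/-- A function on a real vector space is radially decreasing. -/
def RadiallyDecreasing {E : Type*} [AddCommGroup E] [Module ℝ E] (φ : E → ℝ) : Prop :=
  ∀ x : E, ∀ t : ℝ, t ∈ Icc (0:ℝ) 1 → φ x ≤ φ (t • x)

/-!
Call a measure on a vector space *linear at the origin* if
`ν ((1 - λ)A + λB) ≥ (1 - λ)ν(A) + λν(B)` whenever `0 ∈ A ∩ B`. Lebesgue measure on `ℝ` is, and by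
the layer-cake formula this passes to functions `F`, `G` with a common maximum attained at the
origin. Two consequences drive the proof. First, `ν` stays linear at the origin when weighted by a
quasiconcave density which is maximal there, in particular a positively decreasing one.
Second, if `μ` satisfies the Brunn–Minkowski inequality with exponent `1 / d`, apply the functional
inequality to `s ↦ μ (A_s) / μ (A_0)` and `s ↦ μ (B_s) / μ (B_0)`, where `A_s` is the section of `A`
over `s`: a weakly unconditional set has its largest section over the origin. Hölder's inequality
recombines the factors `μ (A_0)`, `μ (B_0)` with the integrals and yields exponent `1 / (d + 1)` for
`ν × μ`. Truncating to boxes makes all quantities finite.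
-/

/-- The Brunn–Minkowski inequality with weight `lam` and dimension `d` (that is, exponent `1 / d`)
for `μ` on the nonempty measurable sets satisfying `P`. The combination `(1 - lam) • A + lam • B`
need not be measurable: its measure is understood as an outer measure. -/
def BrunnMinkowskiOn {E : Type*} [AddCommGroup E] [Module ℝ E] [MeasurableSpace E]
    (P : Set E → Prop) (lam d : ℝ) (μ : Measure E) : Prop :=
  ∀ ⦃A B : Set E⦄, P A → P B → A.Nonempty → B.Nonempty → MeasurableSet A → MeasurableSet B →
    ENNReal.ofReal (1 - lam) * μ A ^ (1 / d) + ENNReal.ofReal lam * μ B ^ (1 / d) ≤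
      μ ((1 - lam) • A + lam • B) ^ (1 / d)

/-- The linear Brunn–Minkowski inequality for measurable sets containing the origin. -/
abbrev LinearAtZero {E : Type*} [AddCommGroup E] [Module ℝ E] [MeasurableSpace E]
    (lam : ℝ) (ν : Measure E) : Prop :=
  BrunnMinkowskiOn (fun A => 0 ∈ A) lam 1 ν

section LebesgueMeasure

theorem volume_add_volume_le_of_isCompact {K L : Set ℝ} (hK : IsCompact K) (hL : IsCompact L)
    (hK₀ : K.Nonempty) (hL₀ : L.Nonempty) : volume K + volume L ≤ volume (K + L) := by
  obtain ⟨x, hxK, hx⟩ := hK.exists_isGreatest hK₀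
  obtain ⟨y, hyL, hy⟩ := hL.exists_isLeast hL₀
  -- `K + min L` and `max K + L` are translates inside `K + L` sharing only `max K + min L`.
  have hdisj : AEDisjoint volume (y +ᵥ K) (x +ᵥ L) := by
    refine measure_mono_null (t := {x + y}) ?_ (measure_singleton _)
    rintro _ ⟨⟨k, hk, rfl⟩, l, hl, hkl⟩
    have hkx := hx hk
    have hyl := hy hl
    simp only [vadd_eq_add, mem_singleton_iff] at hkl ⊢
    linarith
  calc volume K + volume L = volume (y +ᵥ K) + volume (x +ᵥ L) := by simp only [measure_vadd]
    _ = volume ((y +ᵥ K) ∪ (x +ᵥ L)) :=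
      (measure_union₀ (hL.measurableSet.const_vadd x).nullMeasurableSet hdisj).symm
    _ ≤ volume (K + L) := measure_mono <| union_subset
      (image_subset_iff.2 fun k hk => ⟨k, hk, y, hyL, add_comm k y⟩)
      (image_subset_iff.2 fun l hl => ⟨x, hxK, l, hl, rfl⟩)

theorem volume_add_volume_le {A B : Set ℝ} (hA : MeasurableSet A) (hB : MeasurableSet B)
    (hA₀ : A.Nonempty) (hB₀ : B.Nonempty) : volume A + volume B ≤ volume (A + B) := by
  obtain ⟨a, ha⟩ := hA₀
  obtain ⟨b, hb⟩ := hB₀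
  rw [hA.measure_eq_iSup_isCompact, hB.measure_eq_iSup_isCompact]
  simp only [iSup_and']
  refine ENNReal.biSup_add_biSup_le' ⟨∅, empty_subset _, isCompact_empty⟩
    ⟨∅, empty_subset _, isCompact_empty⟩ ?_
  rintro K ⟨hKA, hK⟩ L ⟨hLB, hL⟩
  calc volume K + volume L ≤ volume (insert a K) + volume (insert b L) :=
        add_le_add (measure_mono (subset_insert a K)) (measure_mono (subset_insert b L))
    _ ≤ volume (insert a K + insert b L) :=
        volume_add_volume_le_of_isCompact (hK.insert a) (hL.insert b) (insert_nonempty a K)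
          (insert_nonempty b L)
    _ ≤ volume (A + B) :=
        measure_mono (add_subset_add (insert_subset ha hKA) (insert_subset hb hLB))

theorem linearAtZero_volume (lam : ℝ) : LinearAtZero lam (volume : Measure ℝ) := by
  intro A B _ _ hA₀ hB₀ hA hB
  have volume_smul (c : ℝ) (S : Set ℝ) : ENNReal.ofReal c * volume S ≤ volume (c • S) := by
    rw [Measure.addHaar_smul, Module.finrank_self, pow_one]
    gcongr
    exact le_abs_self c
  simp only [div_one, ENNReal.rpow_one]
  exact (add_le_add (volume_smul _ A) (volume_smul _ B)).trans <|
    volume_add_volume_le (hA.const_smul₀ _) (hB.const_smul₀ _) hA₀.smul_set hB₀.smul_set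

end LebesgueMeasure

section LayerCake

theorem volume_Ioi_inter_ofReal_lt (c : ℝ≥0∞) :
    volume (Ioi (0 : ℝ) ∩ {t | ENNReal.ofReal t < c}) = c := by
  induction c with
  | top => simp
  | coe c =>
    have : Ioi (0 : ℝ) ∩ {t | ENNReal.ofReal t < c} = Ioo 0 (c : ℝ) := by
      ext t
      exact and_congr_right fun ht => ENNReal.ofReal_lt_coe_iff (le_of_lt ht)
    rw [this, Real.volume_Ioo, sub_zero, ENNReal.ofReal_coe_nnreal]

theorem lintegral_eq_lintegral_measure_ofReal_lt {α : Type*} [MeasurableSpace α] (ν : Measure α)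
    [SFinite ν] {f : α → ℝ≥0∞} (hf : Measurable f) :
    ∫⁻ x, f x ∂ν = ∫⁻ t in Ioi (0 : ℝ), ν {x | ENNReal.ofReal t < f x} := by
  have hS : MeasurableSet {p : α × ℝ | ENNReal.ofReal p.2 < f p.1} :=
    measurableSet_lt (by fun_prop) (by fun_prop)
  calc ∫⁻ x, f x ∂ν
      = ∫⁻ x, volume.restrict (Ioi 0) {t | ENNReal.ofReal t < f x} ∂ν := by
        refine lintegral_congr fun x => ?_
        rw [Measure.restrict_apply' measurableSet_Ioi, inter_comm, volume_Ioi_inter_ofReal_lt]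
    _ = (ν.prod (volume.restrict (Ioi 0))) {p | ENNReal.ofReal p.2 < f p.1} :=
        (Measure.prod_apply hS).symm
    _ = ∫⁻ t in Ioi (0 : ℝ), ν {x | ENNReal.ofReal t < f x} := Measure.prod_apply_symm hS

end LayerCake

section LinearAtZero

variable {V : Type*} [AddCommGroup V] [Module ℝ V] [MeasurableSpace V] {lam : ℝ} {ν : Measure V}

theorem LinearAtZero.measure_le (hν : LinearAtZero lam ν) {A B : Set V} (hA₀ : 0 ∈ A)
    (hB₀ : 0 ∈ B) (hA : MeasurableSet A) (hB : MeasurableSet B) :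
    ENNReal.ofReal (1 - lam) * ν A + ENNReal.ofReal lam * ν B ≤ ν ((1 - lam) • A + lam • B) := by
  simpa only [div_one, ENNReal.rpow_one] using hν hA₀ hB₀ ⟨0, hA₀⟩ ⟨0, hB₀⟩ hA hB

theorem LinearAtZero.lintegral_le [SFinite ν] (hν : LinearAtZero lam ν) {F G H : V → ℝ≥0∞}
    (hF : Measurable F) (hG : Measurable G) (hH : Measurable H) (hF₀ : ∀ s, F s ≤ F 0)
    (hG₀ : ∀ s, G s ≤ G 0) (hFG : F 0 = G 0)
    (hmin : ∀ s t, min (F s) (G t) ≤ H ((1 - lam) • s + lam • t)) :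
    ENNReal.ofReal (1 - lam) * ∫⁻ s, F s ∂ν + ENNReal.ofReal lam * ∫⁻ s, G s ∂ν ≤
      ∫⁻ s, H s ∂ν := by
  have measurable_level (f : V → ℝ≥0∞) :
      Measurable fun t : ℝ => ν {x | ENNReal.ofReal t < f x} :=
    Antitone.measurable fun _ _ hst => measure_mono fun _ hx =>
      (ENNReal.ofReal_le_ofReal hst).trans_lt hx
  simp only [lintegral_eq_lintegral_measure_ofReal_lt ν hF,
    lintegral_eq_lintegral_measure_ofReal_lt ν hG, lintegral_eq_lintegral_measure_ofReal_lt ν hH]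
  rw [← lintegral_const_mul _ (measurable_level F), ← lintegral_const_mul _ (measurable_level G),
    ← lintegral_add_left ((measurable_level F).const_mul _)]
  refine lintegral_mono fun t => ?_
  by_cases ht : ENNReal.ofReal t < F 0
  · refine (hν.measure_le ht (ht.trans_eq hFG) (measurableSet_lt measurable_const hF)
      (measurableSet_lt measurable_const hG)).trans (measure_mono ?_)
    rintro _ ⟨_, ⟨x, hx, rfl⟩, _, ⟨y, hy, rfl⟩, rfl⟩
    exact (lt_min hx hy).trans_le (hmin x y)
  · have hF_empty : {x | ENNReal.ofReal t < F x} = ∅ :=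
      eq_empty_of_forall_notMem fun x hx => ht (hx.trans_le (hF₀ x))
    have hG_empty : {x | ENNReal.ofReal t < G x} = ∅ :=
      eq_empty_of_forall_notMem fun x hx => ht (hx.trans_le (hFG ▸ hG₀ x))
    simp [hF_empty, hG_empty]

theorem LinearAtZero.withDensity [SFinite ν] (hν : LinearAtZero lam ν) (hlam : lam ∈ Icc (0 : ℝ) 1)
    {φ : V → ℝ≥0∞} (hφ : Measurable φ) (hφ_quasi : QuasiconcaveOn ℝ univ φ)
    (hφ₀ : ∀ x, φ x ≤ φ 0) : LinearAtZero lam (ν.withDensity φ) := by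
  intro A B hA₀ hB₀ _ _ hA hB
  set C := (1 - lam) • A + lam • B
  set D := toMeasurable (ν.withDensity φ) C
  have hD : MeasurableSet D := measurableSet_toMeasurable _ _
  have hφ_min (x y : V) : min (φ x) (φ y) ≤ φ ((1 - lam) • x + lam • y) :=
    (quasiconcaveOn_iff_min_le.1 hφ_quasi).2 (mem_univ x) (mem_univ y) (sub_nonneg.2 hlam.2)
      hlam.1 (sub_add_cancel 1 lam)
  have indicator_le {S : Set V} (hS : 0 ∈ S) (x : V) : S.indicator φ x ≤ S.indicator φ 0 := by
    rw [indicator_of_mem hS]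
    exact (indicator_le_self S φ x).trans (hφ₀ x)
  have key := hν.lintegral_le (hφ.indicator hA) (hφ.indicator hB) (hφ.indicator hD)
    (indicator_le hA₀) (indicator_le hB₀)
    (by rw [indicator_of_mem hA₀, indicator_of_mem hB₀]) fun x y => by
      by_cases hx : x ∈ A; swap
      · simp [hx]
      by_cases hy : y ∈ B; swap
      · simp [hy]
      have hxy : (1 - lam) • x + lam • y ∈ D := subset_toMeasurable _ _ <|
        add_mem_add (smul_mem_smul_set hx) (smul_mem_smul_set hy)
      rw [indicator_of_mem hx, indicator_of_mem hy, indicator_of_mem hxy]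
      exact hφ_min x y
  simpa only [div_one, ENNReal.rpow_one, lintegral_indicator, hA, hB, hD, ← withDensity_apply,
    D, measure_toMeasurable] using key

theorem LinearAtZero.restrict (hν : LinearAtZero lam ν) (hlam : lam ∈ Icc (0 : ℝ) 1) {S : Set V}
    (hS : MeasurableSet S) (hS_convex : Convex ℝ S) (hS₀ : 0 ∈ S) :
    LinearAtZero lam (ν.restrict S) := by
  intro A B hA₀ hB₀ _ _ hA hB
  simp only [div_one, ENNReal.rpow_one, Measure.restrict_apply' hS]
  refine (hν.measure_le (mem_inter hA₀ hS₀) (mem_inter hB₀ hS₀) (hA.inter hS) (hB.inter hS)).trans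
    (measure_mono ?_)
  rintro _ ⟨_, ⟨x, hx, rfl⟩, _, ⟨y, hy, rfl⟩, rfl⟩
  exact ⟨add_mem_add (smul_mem_smul_set hx.1) (smul_mem_smul_set hy.1),
    hS_convex hx.2 hy.2 (sub_nonneg.2 hlam.2) hlam.1 (sub_add_cancel 1 lam)⟩

end LinearAtZero

section PositivelyDecreasing

variable {φ : ℝ → ℝ}

theorem PositivelyDecreasing.antitoneOn_Ici (hφ : PositivelyDecreasing φ) :
    AntitoneOn φ (Ici 0) :=
  fun s hs t _ hst => hφ.1 s t hs hst

theorem PositivelyDecreasing.monotoneOn_Iic (hφ : PositivelyDecreasing φ) :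
    MonotoneOn φ (Iic 0) := fun s _ t ht hst => by
  simpa only [neg_neg] using hφ.2 (-t) (-s) (neg_nonneg.2 ht) (neg_le_neg hst)

theorem PositivelyDecreasing.le_apply_zero (hφ : PositivelyDecreasing φ) (x : ℝ) : φ x ≤ φ 0 := by
  rcases le_total 0 x with hx | hx
  · exact hφ.antitoneOn_Ici self_mem_Ici hx hx
  · exact hφ.monotoneOn_Iic hx self_mem_Iic hx

theorem PositivelyDecreasing.quasiconcaveOn (hφ : PositivelyDecreasing φ) :
    QuasiconcaveOn ℝ univ φ := by
  refine convex_univ.quasiconcaveOn_of_convex_ge fun r => OrdConnected.convex ⟨?_⟩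
  rintro x hx y hy z ⟨hxz, hzy⟩
  rcases le_total 0 z with hz | hz
  · exact le_trans hy (hφ.antitoneOn_Ici hz (hz.trans hzy) hzy)
  · exact le_trans hx (hφ.monotoneOn_Iic (hxz.trans hz) hz hxz)

theorem measurable_of_quasiconcaveOn_univ {β : Type*} [LinearOrder β] [TopologicalSpace β]
    [OrderTopology β] [SecondCountableTopology β] [MeasurableSpace β] [BorelSpace β] {f : ℝ → β}
    (hf : QuasiconcaveOn ℝ univ f) : Measurable f :=
  measurable_of_Ioi fun r => by
    have hlevel := (hf.convex_gt r).ordConnected.measurableSet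
    simp only [mem_univ, true_and] at hlevel
    exact hlevel

theorem PositivelyDecreasing.linearAtZero_withDensity (hφ : PositivelyDecreasing φ) {lam : ℝ}
    (hlam : lam ∈ Icc (0 : ℝ) 1) :
    LinearAtZero lam (volume.withDensity fun x => ENNReal.ofReal (φ x)) := by
  have hquasi : QuasiconcaveOn ℝ univ fun x => ENNReal.ofReal (φ x) :=
    hφ.quasiconcaveOn.monotone_comp (g := ENNReal.ofReal) ENNReal.ofReal_mono
  exact (linearAtZero_volume lam).withDensity hlam (measurable_of_quasiconcaveOn_univ hquasi) hquasi
    fun x => ENNReal.ofReal_le_ofReal (hφ.le_apply_zero x)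

theorem PositivelyDecreasing.isLocallyFiniteMeasure_withDensity (hφ : PositivelyDecreasing φ) :
    IsLocallyFiniteMeasure (volume.withDensity fun x => ENNReal.ofReal (φ x)) := by
  have hle : (volume.withDensity fun x => ENNReal.ofReal (φ x)) ≤
      (φ 0).toNNReal • volume := by
    rw [ENNReal.smul_def, ← withDensity_const]
    exact withDensity_mono (ae_of_all _ fun x => ENNReal.ofReal_le_ofReal (hφ.le_apply_zero x))
  exact Measure.isLocallyFiniteMeasure_of_le hle

end PositivelyDecreasing

section RelativeSectionMeasure

variable {V E : Type*} [Zero V] [MeasurableSpace E] {P : Set E → Prop} {μ : Measure E}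
  {A : Set (V × E)}

/-- The class of sets `A ⊆ V × E` to which Brunn–Minkowski inequalities for sets satisfying `P` are
lifted: all sections over `V` satisfy `P`, and all of them are contained in the section over `0`. -/
def CentrallyFibered (P : Set E → Prop) (A : Set (V × E)) : Prop :=
  (∀ p ∈ A, (0, p.2) ∈ A) ∧ ∀ s, P (Prod.mk s ⁻¹' A)

open Classical in
/-- The measure of the section of `A` over `s` relative to the section over `0`. The value at `0` is
`1` even when the section over `0` is null. -/
def relativeSectionMeasure (μ : Measure E) (A : Set (V × E)) (s : V) : ℝ≥0∞ :=
  if s = 0 then 1 else μ (Prod.mk s ⁻¹' A) / μ (Prod.mk 0 ⁻¹' A)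

theorem relativeSectionMeasure_zero : relativeSectionMeasure μ A 0 = 1 := if_pos rfl

theorem measurable_relativeSectionMeasure [MeasurableSpace V] [MeasurableSingletonClass V]
    [SFinite μ] (hA : MeasurableSet A) : Measurable (relativeSectionMeasure μ A) :=
  Measurable.ite (measurableSet_singleton 0) measurable_const
    ((measurable_measure_prodMk_left hA).div_const _)

theorem relativeSectionMeasure_mul_le (s : V) :
    relativeSectionMeasure μ A s * μ (Prod.mk 0 ⁻¹' A) ≤ μ (Prod.mk s ⁻¹' A) := by
  rw [relativeSectionMeasure]
  split_ifs with hs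
  · rw [hs, one_mul]
  · rw [mul_comm]
    exact ENNReal.mul_div_le

theorem CentrallyFibered.measure_section_le (hA : CentrallyFibered P A) (s : V) :
    μ (Prod.mk s ⁻¹' A) ≤ μ (Prod.mk 0 ⁻¹' A) :=
  measure_mono fun x hx => hA.1 (s, x) hx

theorem CentrallyFibered.relativeSectionMeasure_le_one (hA : CentrallyFibered P A) (s : V) :
    relativeSectionMeasure μ A s ≤ 1 := by
  rw [relativeSectionMeasure]
  split_ifs
  · exact le_rfl
  · exact ENNReal.div_le_of_le_mul ((hA.measure_section_le s).trans_eq (one_mul _).symm)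

theorem CentrallyFibered.section_nonempty (hA : CentrallyFibered P A) (hA₀ : A.Nonempty) {s : V}
    (hs : relativeSectionMeasure μ A s ≠ 0) : (Prod.mk s ⁻¹' A).Nonempty := by
  by_cases hs₀ : s = 0
  · obtain ⟨p, hp⟩ := hA₀
    exact ⟨p.2, hs₀ ▸ hA.1 p hp⟩
  · rw [relativeSectionMeasure, if_neg hs₀] at hs
    exact nonempty_of_measure_ne_zero (μ := μ) (ENNReal.div_ne_zero.1 hs).1

theorem CentrallyFibered.prod_apply_le [MeasurableSpace V] [MeasurableSingletonClass V]
    [IsFiniteMeasure μ] (ν : Measure V) (hA : CentrallyFibered P A) (hA_meas : MeasurableSet A) :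
    (ν.prod μ) A ≤ μ (Prod.mk 0 ⁻¹' A) * ∫⁻ s, relativeSectionMeasure μ A s ∂ν := by
  rw [Measure.prod_apply hA_meas,
    ← lintegral_const_mul _ (measurable_relativeSectionMeasure hA_meas)]
  refine lintegral_mono fun s => ?_
  rw [relativeSectionMeasure]
  split_ifs with hs
  · rw [hs, mul_one]
  · exact (ENNReal.mul_div_cancel' (fun h => le_zero_iff.1 (h ▸ hA.measure_section_le s))
      fun h => absurd h (measure_ne_top _ _)).ge

end RelativeSectionMeasure

section Product

theorem geomMean_add_geomMean_le {d : ℝ} (hd : 0 < d) (v w x y x' y' : ℝ≥0∞) :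
    v * (x ^ d * x') ^ (1 / (d + 1)) + w * (y ^ d * y') ^ (1 / (d + 1)) ≤
      ((v * x + w * y) ^ d * (v * x' + w * y')) ^ (1 / (d + 1)) := by
  have hd₁ : 0 < d + 1 := by positivity
  have hpq : ((d + 1) / d).HolderConjugate (d + 1) :=
    Real.holderConjugate_iff.2 ⟨(one_lt_div hd).2 (lt_add_one d), by field_simp⟩
  have root_mul (z z' : ℝ≥0∞) :
      (z ^ d * z') ^ (1 / (d + 1)) = z ^ (d / (d + 1)) * z' ^ (1 / (d + 1)) := by
    rw [ENNReal.mul_rpow_of_nonneg _ _ (by positivity), ← ENNReal.rpow_mul, mul_one_div]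
  have weight_mul (u z z' : ℝ≥0∞) : u * (z ^ d * z') ^ (1 / (d + 1)) =
      (u * z) ^ (d / (d + 1)) * (u * z') ^ (1 / (d + 1)) := by
    have hu : u ^ (d / (d + 1)) * u ^ (1 / (d + 1)) = u := by
      rw [← ENNReal.rpow_add_of_nonneg _ _ (by positivity) (by positivity), ← add_div,
        div_self hd₁.ne', ENNReal.rpow_one]
    rw [root_mul, ENNReal.mul_rpow_of_nonneg _ _ (by positivity),
      ENNReal.mul_rpow_of_nonneg _ _ (by positivity), mul_mul_mul_comm, hu]
  have holder := ENNReal.inner_le_Lp_mul_Lq Finset.univ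
    ![(v * x) ^ (d / (d + 1)), (w * y) ^ (d / (d + 1))]
    ![(v * x') ^ (1 / (d + 1)), (w * y') ^ (1 / (d + 1))] hpq
  have hp_cancel : d / (d + 1) * ((d + 1) / d) = 1 := by field_simp
  have hq_cancel : 1 / (d + 1) * (d + 1) = 1 := by field_simp
  simp only [Fin.sum_univ_two, Matrix.cons_val_zero, Matrix.cons_val_one, ← ENNReal.rpow_mul,
    hp_cancel, hq_cancel, ENNReal.rpow_one, one_div_div] at holder
  rw [weight_mul, weight_mul, root_mul]
  exact holder

variable {V E : Type*} [AddCommGroup V] [Module ℝ V] [MeasurableSpace V]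
  [AddCommGroup E] [Module ℝ E] [MeasurableSpace E] {P : Set E → Prop} {lam d : ℝ}

theorem BrunnMinkowskiOn.min_relativeSectionMeasure_mul_le {μ : Measure E}
    (hμ : BrunnMinkowskiOn P lam d μ) (hd : 0 < d) {A B C : Set (V × E)}
    (hA : CentrallyFibered P A) (hB : CentrallyFibered P B) (hA₀ : A.Nonempty) (hB₀ : B.Nonempty)
    (hA_meas : MeasurableSet A) (hB_meas : MeasurableSet B) (hC : (1 - lam) • A + lam • B ⊆ C)
    (s t : V) :
    min (relativeSectionMeasure μ A s) (relativeSectionMeasure μ B t) *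
        (ENNReal.ofReal (1 - lam) * μ (Prod.mk 0 ⁻¹' A) ^ (1 / d) +
          ENNReal.ofReal lam * μ (Prod.mk 0 ⁻¹' B) ^ (1 / d)) ^ d ≤
      μ (Prod.mk ((1 - lam) • s + lam • t) ⁻¹' C) := by
  set τ := min (relativeSectionMeasure μ A s) (relativeSectionMeasure μ B t)
  rcases eq_or_ne τ 0 with hτ₀ | hτ₀
  · rw [hτ₀, zero_mul]
    exact zero_le
  have hτ_pos := lt_min_iff.1 (pos_iff_ne_zero.2 hτ₀)
  have hτA : τ * μ (Prod.mk 0 ⁻¹' A) ≤ μ (Prod.mk s ⁻¹' A) :=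
    (mul_le_mul_left (min_le_left _ _) _).trans (relativeSectionMeasure_mul_le s)
  have hτB : τ * μ (Prod.mk 0 ⁻¹' B) ≤ μ (Prod.mk t ⁻¹' B) :=
    (mul_le_mul_left (min_le_right _ _) _).trans (relativeSectionMeasure_mul_le t)
  have sections_subset : (1 - lam) • (Prod.mk s ⁻¹' A) + lam • (Prod.mk t ⁻¹' B) ⊆
      Prod.mk ((1 - lam) • s + lam • t) ⁻¹' C := by
    rintro _ ⟨_, ⟨x, hx, rfl⟩, _, ⟨y, hy, rfl⟩, rfl⟩
    exact hC ⟨_, ⟨(s, x), hx, rfl⟩, _, ⟨(t, y), hy, rfl⟩, rfl⟩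
  rw [← ENNReal.rpow_le_rpow_iff (one_div_pos.2 hd), ENNReal.mul_rpow_of_nonneg _ _ (by positivity),
    ← ENNReal.rpow_mul, mul_one_div_cancel hd.ne', ENNReal.rpow_one]
  calc τ ^ (1 / d) * (ENNReal.ofReal (1 - lam) * μ (Prod.mk 0 ⁻¹' A) ^ (1 / d) +
        ENNReal.ofReal lam * μ (Prod.mk 0 ⁻¹' B) ^ (1 / d))
      = ENNReal.ofReal (1 - lam) * (τ * μ (Prod.mk 0 ⁻¹' A)) ^ (1 / d) +
        ENNReal.ofReal lam * (τ * μ (Prod.mk 0 ⁻¹' B)) ^ (1 / d) := by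
        rw [ENNReal.mul_rpow_of_nonneg _ _ (by positivity),
          ENNReal.mul_rpow_of_nonneg _ _ (by positivity)]
        ring
    _ ≤ ENNReal.ofReal (1 - lam) * μ (Prod.mk s ⁻¹' A) ^ (1 / d) +
        ENNReal.ofReal lam * μ (Prod.mk t ⁻¹' B) ^ (1 / d) := by gcongr
    _ ≤ μ ((1 - lam) • (Prod.mk s ⁻¹' A) + lam • (Prod.mk t ⁻¹' B)) ^ (1 / d) :=
        hμ (hA.2 s) (hB.2 t) (hA.section_nonempty hA₀ hτ_pos.1.ne')
          (hB.section_nonempty hB₀ hτ_pos.2.ne') (measurable_prodMk_left hA_meas)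
          (measurable_prodMk_left hB_meas)
    _ ≤ μ (Prod.mk ((1 - lam) • s + lam • t) ⁻¹' C) ^ (1 / d) := by gcongr

theorem BrunnMinkowskiOn.mul_lintegral_relativeSectionMeasure_le [MeasurableSingletonClass V]
    {ν : Measure V} {μ : Measure E} [SFinite ν] [SFinite μ]
    (hμ : BrunnMinkowskiOn P lam d μ) (hν : LinearAtZero lam ν) (hd : 0 < d) {A B : Set (V × E)}
    (hA : CentrallyFibered P A) (hB : CentrallyFibered P B) (hA₀ : A.Nonempty) (hB₀ : B.Nonempty)
    (hA_meas : MeasurableSet A) (hB_meas : MeasurableSet B) :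
    (ENNReal.ofReal (1 - lam) * μ (Prod.mk 0 ⁻¹' A) ^ (1 / d) +
        ENNReal.ofReal lam * μ (Prod.mk 0 ⁻¹' B) ^ (1 / d)) ^ d *
      (ENNReal.ofReal (1 - lam) * ∫⁻ s, relativeSectionMeasure μ A s ∂ν +
        ENNReal.ofReal lam * ∫⁻ s, relativeSectionMeasure μ B s ∂ν) ≤
      (ν.prod μ) ((1 - lam) • A + lam • B) := by
  set m := (ENNReal.ofReal (1 - lam) * μ (Prod.mk 0 ⁻¹' A) ^ (1 / d) +
    ENNReal.ofReal lam * μ (Prod.mk 0 ⁻¹' B) ^ (1 / d)) ^ d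
  set C := toMeasurable (ν.prod μ) ((1 - lam) • A + lam • B)
  have hC : MeasurableSet C := measurableSet_toMeasurable _ _
  have hF := measurable_relativeSectionMeasure (μ := μ) hA_meas
  have hG := measurable_relativeSectionMeasure (μ := μ) hB_meas
  have le_at_zero {S : Set (V × E)} (hS : CentrallyFibered P S) (s : V) :
      m * relativeSectionMeasure μ S s ≤ m * relativeSectionMeasure μ S 0 := by
    rw [relativeSectionMeasure_zero]
    exact mul_le_mul_right (hS.relativeSectionMeasure_le_one s) m
  have key := hν.lintegral_le (hF.const_mul m) (hG.const_mul m) (measurable_measure_prodMk_left hC)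
    (le_at_zero hA) (le_at_zero hB) (by simp only [relativeSectionMeasure_zero]) fun s t => by
      rw [← mul_min, mul_comm]
      exact hμ.min_relativeSectionMeasure_mul_le hd hA hB hA₀ hB₀ hA_meas hB_meas
        (subset_toMeasurable _ _) s t
  rw [lintegral_const_mul _ hF, lintegral_const_mul _ hG, ← Measure.prod_apply hC,
    measure_toMeasurable] at key
  rwa [mul_add, mul_left_comm, mul_left_comm m]

theorem BrunnMinkowskiOn.prod [MeasurableSingletonClass V] {ν : Measure V} {μ : Measure E}
    [SFinite ν] [IsFiniteMeasure μ] (hμ : BrunnMinkowskiOn P lam d μ) (hν : LinearAtZero lam ν)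
    (hd : 0 < d) : BrunnMinkowskiOn (CentrallyFibered P) lam (d + 1) (ν.prod μ) := by
  intro A B hA hB hA₀ hB₀ hA_meas hB_meas
  have rpow_root (c : ℝ≥0∞) : (c ^ (1 / d)) ^ d = c := by
    rw [← ENNReal.rpow_mul, one_div_mul_cancel hd.ne', ENNReal.rpow_one]
  have le_root {S : Set (V × E)} (hS : CentrallyFibered P S) (hS_meas : MeasurableSet S) :
      (ν.prod μ) S ^ (1 / (d + 1)) ≤ ((μ (Prod.mk 0 ⁻¹' S) ^ (1 / d)) ^ d *
        ∫⁻ s, relativeSectionMeasure μ S s ∂ν) ^ (1 / (d + 1)) := by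
    rw [rpow_root]
    exact ENNReal.rpow_le_rpow (hS.prod_apply_le ν hS_meas) (by positivity)
  refine (add_le_add (mul_le_mul_right (le_root hA hA_meas) _)
    (mul_le_mul_right (le_root hB hB_meas) _)).trans ?_
  refine (geomMean_add_geomMean_le hd _ _ _ _ _ _).trans ?_
  exact ENNReal.rpow_le_rpow (hμ.mul_lintegral_relativeSectionMeasure_le hν hd hA hB hA₀ hB₀
    hA_meas hB_meas) (by positivity)

end Product

section Transport

variable {E F : Type*} [AddCommGroup E] [Module ℝ E] [MeasurableSpace E]
  [AddCommGroup F] [Module ℝ F] [MeasurableSpace F]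
  {P : Set E → Prop} {Q : Set F → Prop} {lam d : ℝ} {μ : Measure E}

theorem BrunnMinkowskiOn.of_measurePreserving {ν : Measure F} (hμ : BrunnMinkowskiOn P lam d μ)
    (hd : 0 ≤ d) (e : E ≃ᵐ F) (he : IsLinearMap ℝ e) (he_preserving : MeasurePreserving e μ ν)
    (hPQ : ∀ A : Set F, A.Nonempty → Q A → P (e ⁻¹' A)) : BrunnMinkowskiOn Q lam d ν := by
  intro A B hA hB hA₀ hB₀ hA_meas hB_meas
  have preimage_subset : (1 - lam) • (e ⁻¹' A) + lam • (e ⁻¹' B) ⊆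
      e ⁻¹' ((1 - lam) • A + lam • B) := by
    rintro _ ⟨_, ⟨x, hx, rfl⟩, _, ⟨y, hy, rfl⟩, rfl⟩
    rw [mem_preimage, he.map_add, he.map_smul, he.map_smul]
    exact add_mem_add (smul_mem_smul_set hx) (smul_mem_smul_set hy)
  simp only [← he_preserving.measure_preimage_equiv]
  refine (hμ (hPQ A hA₀ hA) (hPQ B hB₀ hB) (hA₀.preimage e.surjective) (hB₀.preimage e.surjective)
    (e.measurable hA_meas) (e.measurable hB_meas)).trans ?_
  exact ENNReal.rpow_le_rpow (measure_mono preimage_subset) (by positivity)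

theorem brunnMinkowskiOn_of_restrict {S : ℕ → Set E} (hS : Monotone S) (hS_univ : ⋃ k, S k = univ)
    (hd : 0 ≤ d) (h : ∀ k, BrunnMinkowskiOn P lam d (μ.restrict (S k))) :
    BrunnMinkowskiOn P lam d μ := by
  intro A B hA hB hA₀ hB₀ hA_meas hB_meas
  have tendsto_root {T : Set E} (hT : MeasurableSet T) (c : ℝ) :
      Tendsto (fun k => ENNReal.ofReal c * μ.restrict (S k) T ^ (1 / d)) atTop
        (𝓝 (ENNReal.ofReal c * μ T ^ (1 / d))) := by
    have htendsto := tendsto_measure_iUnion_atTop (μ := μ) (s := fun k => T ∩ S k)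
      fun _ _ hkl => inter_subset_inter_right T (hS hkl)
    rw [← inter_iUnion, hS_univ, inter_univ] at htendsto
    simp only [Measure.restrict_apply hT]
    exact ENNReal.Tendsto.const_mul ((ENNReal.continuous_rpow_const.tendsto _).comp htendsto)
      (Or.inr ENNReal.ofReal_ne_top)
  refine le_of_tendsto' ((tendsto_root hA_meas _).add (tendsto_root hB_meas _)) fun k => ?_
  exact (h k hA hB hA₀ hB₀ hA_meas hB_meas).trans
    (ENNReal.rpow_le_rpow (Measure.restrict_apply_le _ _) (by positivity))

end Transport

section WeaklyUnconditional

theorem WeaklyUnconditional.zero_mem {n : ℕ} {A : Set (Fin n → ℝ)} (hA : WeaklyUnconditional A)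
    (hA₀ : A.Nonempty) : 0 ∈ A := by
  obtain ⟨x, hx⟩ := hA₀
  have hmem := hA x hx (fun _ => 0) fun _ => Or.inl rfl
  simp only [zero_mul] at hmem
  exact hmem

theorem piFinSuccAbove_zero_symm_apply {n : ℕ} {α : Type*} [MeasurableSpace α]
    (p : α × (Fin n → α)) :
    (MeasurableEquiv.piFinSuccAbove (fun _ : Fin (n + 1) => α) 0).symm p = Fin.cons p.1 p.2 :=
  Fin.insertNth_zero' p.1 p.2

theorem isLinearMap_piFinSuccAbove_zero_symm (n : ℕ) :
    IsLinearMap ℝ (MeasurableEquiv.piFinSuccAbove (fun _ : Fin (n + 1) => ℝ) 0).symm := by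
  constructor <;> intros <;> funext i <;> refine Fin.cases ?_ (fun j => ?_) i <;>
    simp [piFinSuccAbove_zero_symm_apply]

theorem WeaklyUnconditional.centrallyFibered {n : ℕ} {A : Set (Fin (n + 1) → ℝ)}
    (hA : WeaklyUnconditional A) :
    CentrallyFibered WeaklyUnconditional
      ((MeasurableEquiv.piFinSuccAbove (fun _ : Fin (n + 1) => ℝ) 0).symm ⁻¹' A) := by
  have cons_mem {s : ℝ} {x : Fin n → ℝ} (hx : (Fin.cons s x : Fin (n + 1) → ℝ) ∈ A) {δ : ℝ}
      (hδ : δ = 0 ∨ δ = 1) {ε : Fin n → ℝ} (hε : ∀ i, ε i = 0 ∨ ε i = 1) :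
      (Fin.cons (δ * s) fun i => ε i * x i : Fin (n + 1) → ℝ) ∈ A := by
    convert hA _ hx (Fin.cons δ ε) (Fin.cases hδ hε) using 1
    funext i
    refine Fin.cases ?_ (fun j => ?_) i <;> simp
  simp only [CentrallyFibered, WeaklyUnconditional, mem_preimage, piFinSuccAbove_zero_symm_apply]
  refine ⟨fun p hp => ?_, fun s x hx ε hε => ?_⟩
  · simpa using cons_mem hp (Or.inl rfl) (ε := 1) fun _ => Or.inr rfl
  · simpa using cons_mem hx (Or.inr rfl) hε

theorem brunnMinkowskiOn_pi_one {lam : ℝ} {ν : Fin 1 → Measure ℝ}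
    (hν : LinearAtZero lam (ν 0)) :
    BrunnMinkowskiOn WeaklyUnconditional lam 1 (Measure.pi ν) :=
  BrunnMinkowskiOn.of_measurePreserving hν zero_le_one
    (MeasurableEquiv.piUnique fun _ : Fin 1 => ℝ).symm
    ⟨fun _ _ => rfl, fun _ _ => rfl⟩ (measurePreserving_piUnique ν).symm
    fun _ hA₀ hA => hA.zero_mem hA₀

theorem brunnMinkowskiOn_pi_succ {lam : ℝ} {n : ℕ} (hn : 0 < n) {ν : Fin (n + 1) → Measure ℝ}
    [∀ i, IsFiniteMeasure (ν i)] (hν : LinearAtZero lam (ν 0))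
    (ih : BrunnMinkowskiOn WeaklyUnconditional lam n (Measure.pi fun i : Fin n => ν i.succ)) :
    BrunnMinkowskiOn WeaklyUnconditional lam (n + 1) (Measure.pi ν) :=
  (ih.prod hν (Nat.cast_pos.2 hn)).of_measurePreserving (by positivity)
    (MeasurableEquiv.piFinSuccAbove (fun _ => ℝ) 0).symm (isLinearMap_piFinSuccAbove_zero_symm n)
    (measurePreserving_piFinSuccAbove ν 0).symm fun _ _ hA => hA.centrallyFibered

theorem brunnMinkowskiOn_pi_of_isFiniteMeasure {lam : ℝ} {n : ℕ} (hn : 0 < n)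
    (ν : Fin n → Measure ℝ) [∀ i, IsFiniteMeasure (ν i)] (hν : ∀ i, LinearAtZero lam (ν i)) :
    BrunnMinkowskiOn WeaklyUnconditional lam n (Measure.pi ν) := by
  induction n, hn using Nat.le_induction with
  | base => simpa using brunnMinkowskiOn_pi_one (hν 0)
  | succ n hn ih => simpa using brunnMinkowskiOn_pi_succ hn (hν 0) (ih _ fun i => hν i.succ)

theorem iUnion_pi_Icc_eq_univ (ι : Type*) [Finite ι] :
    ⋃ k : ℕ, univ.pi (fun _ : ι => Icc (-(k : ℝ)) k) = univ := by
  cases nonempty_fintype ι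
  refine eq_univ_of_forall fun x => ?_
  obtain ⟨k, hk⟩ := exists_nat_ge ‖x‖
  exact mem_iUnion.2 ⟨k, fun i _ => abs_le.1 ((norm_le_pi_norm x i).trans hk)⟩

theorem statement0_general {n : ℕ} (hn : 0 < n) {lam : ℝ} (hlam : lam ∈ Icc (0 : ℝ) 1)
    (ν : Fin n → Measure ℝ) [∀ i, IsLocallyFiniteMeasure (ν i)]
    (hν : ∀ i, LinearAtZero lam (ν i)) :
    BrunnMinkowskiOn WeaklyUnconditional lam n (Measure.pi ν) := by
  have box_mono : Monotone fun k : ℕ => univ.pi fun _ : Fin n => Icc (-(k : ℝ)) k :=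
    fun k l hkl => pi_mono fun _ _ => Icc_subset_Icc (by gcongr) (by gcongr)
  refine brunnMinkowskiOn_of_restrict box_mono (iUnion_pi_Icc_eq_univ _) n.cast_nonneg fun k => ?_
  rw [Measure.restrict_pi_pi]
  have (i : Fin n) : IsFiniteMeasure ((ν i).restrict (Icc (-(k : ℝ)) k)) :=
    ⟨by simpa using isCompact_Icc.measure_lt_top⟩
  exact brunnMinkowskiOn_pi_of_isFiniteMeasure hn _ fun i =>
    (hν i).restrict hlam measurableSet_Icc (convex_Icc _ _) (by simp)

end WeaklyUnconditional

/-- Theorem A / `t:BM_prod_quasi-conc`: the Brunn–Minkowski inequality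
for weakly unconditional sets with respect to a product of measures on `ℝⁿ` with
positively decreasing densities. -/
theorem statement0 {n : ℕ} (hn : 0 < n) (φ : Fin n → ℝ → ℝ)
    (hφ0 : ∀ i x, 0 ≤ φ i x) (hφmeas : ∀ i, Measurable (φ i))
    (hφdec : ∀ i, PositivelyDecreasing (φ i))
    (μ : Measure (Fin n → ℝ))
    (hμ : μ = Measure.pi fun i => (volume : Measure ℝ).withDensity
      fun x => ENNReal.ofReal (φ i x))
    (lam : ℝ) (hlam : lam ∈ Ioo (0:ℝ) 1)
    (A B : Set (Fin n → ℝ)) (hA : A.Nonempty) (hB : B.Nonempty)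
    (hAw : WeaklyUnconditional A) (hBw : WeaklyUnconditional B)
    (hAm : MeasurableSet A) (hBm : MeasurableSet B)
    (hCm : MeasurableSet ((1 - lam) • A + lam • B)) :
    ENNReal.ofReal (1 - lam) * μ A ^ (1/(n:ℝ)) + ENNReal.ofReal lam * μ B ^ (1/(n:ℝ))
      ≤ μ ((1 - lam) • A + lam • B) ^ (1/(n:ℝ)) := by
  have (i : Fin n) := (hφdec i).isLocallyFiniteMeasure_withDensity
  subst hμ
  exact statement0_general hn (Ioo_subset_Icc_self hlam) _
    (fun i => (hφdec i).linearAtZero_withDensity (Ioo_subset_Icc_self hlam)) hAw hBw hA hB hAm hBm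

end
end

section
/- Let (X,d_X,μ_X) and (Y,d_Y,μ_Y) be metric measure spaces with μ_X σ-finite, μ_Y locally finite and μ_{X×Y} a Radon measure. If (X,d_X,μ_X) satisfies the general inequality B̄M(1) and (Y,d_Y,μ_Y) satisfies BM(p) for some p≥−1, then (X×Y,ρ,μ_{X×Y}) satisfies BM(1/(1+p⁻¹)), where 1/(1+p⁻¹) is interpreted as 0 when p=0 and as 1 when p=∞. -/
open MeasureTheory Set Metric Filter
open scoped ENNReal NNReal Topology Pointwise

noncomputable section

/-!
Slice the product over `X`. For compact `K`, `L` and `C ⊇ (1-λ)K ⋆ λL`, the inequality `BM(p)` of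
`Y`, applied to sections, shows that `f x = μY (K_x)`, `g x = μY (L_x)`, `h x = μY (C_x)` satisfy
`M_p(f x, g y, λ) ≤ h z` whenever `z` is a `λ`-point between `x` and `y`. Hence the superlevel
sets `{f ≥ t sup f}`, `{g ≥ t sup g}` and `{h ≥ t M_p(sup f, sup g, λ)}` satisfy the inclusion
hypothesis of `B̄M(1)` on `X`, and the first two are nonempty for `t < 1`. Integrating over
`t ∈ (0, 1)` gives
`∫ h ≥ M_p(sup f, sup g, λ) ((1-λ) (∫ f) / sup f + λ (∫ g) / sup g)`,
and Hölder's inequality `M_q(a u, b v, λ) ≤ M_p(a, b, λ) ((1-λ) u + λ v)` with `q = p / (p + 1)`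
bounds the right-hand side from below by `M_q(∫ f, ∫ g, λ)`. Inner regularity passes from compact to
measurable sets.
-/

section Means

variable {p : EReal} {lam r : ℝ} {a b c d t u v : ℝ≥0∞}

lemma Mp_of_eq_zero (h : a = 0 ∨ b = 0) : Mp p lam a b = 0 := by
  simp only [Mp, if_pos h]

lemma Mp_top (ha : a ≠ 0) (hb : b ≠ 0) : Mp ⊤ lam a b = max a b := by
  simp [Mp, ha, hb]

lemma Mp_bot (ha : a ≠ 0) (hb : b ≠ 0) : Mp ⊥ lam a b = min a b := by
  simp [Mp, ha, hb]

lemma Mp_zero (ha : a ≠ 0) (hb : b ≠ 0) : Mp 0 lam a b = a ^ (1 - lam) * b ^ lam := by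
  simp [Mp, ha, hb]

lemma Mp_coe (hr : r ≠ 0) (ha : a ≠ 0) (hb : b ≠ 0) :
    Mp r lam a b =
      (ENNReal.ofReal (1 - lam) * a ^ r + ENNReal.ofReal lam * b ^ r) ^ (1 / r) := by
  simp [Mp, ha, hb, hr]

lemma ofReal_one_sub_add_ofReal (hlam : lam ∈ Icc (0 : ℝ) 1) :
    ENNReal.ofReal (1 - lam) + ENNReal.ofReal lam = 1 := by
  rw [← ENNReal.ofReal_add (sub_nonneg.2 hlam.2) hlam.1, sub_add_cancel, ENNReal.ofReal_one]

lemma ennreal_rpow_le_rpow_of_nonpos (hr : r ≤ 0) (hab : a ≤ b) : b ^ r ≤ a ^ r := by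
  rw [← neg_neg r, ENNReal.rpow_neg b, ENNReal.rpow_neg a, ENNReal.inv_le_inv]
  exact ENNReal.rpow_le_rpow hab (neg_nonneg.2 hr)

lemma Mp_mono (hlam : lam ∈ Icc (0 : ℝ) 1) (hac : a ≤ c) (hbd : b ≤ d) :
    Mp p lam a b ≤ Mp p lam c d := by
  have hlam' : 0 ≤ 1 - lam := sub_nonneg.2 hlam.2
  by_cases hab : a = 0 ∨ b = 0
  · simp only [Mp_of_eq_zero hab, zero_le]
  have hcd : ¬(c = 0 ∨ d = 0) :=
    mt (Or.imp (fun hc => le_zero_iff.1 (hc ▸ hac)) fun hd => le_zero_iff.1 (hd ▸ hbd)) hab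
  simp only [Mp, if_neg hab, if_neg hcd]
  split_ifs
  · exact max_le_max hac hbd
  · exact min_le_min hac hbd
  · exact mul_le_mul' (ENNReal.rpow_le_rpow hac hlam') (ENNReal.rpow_le_rpow hbd hlam.1)
  · rcases le_total 0 p.toReal with hp | hp
    · have := one_div_nonneg.2 hp
      gcongr
    · have := ennreal_rpow_le_rpow_of_nonpos hp hac
      have := ennreal_rpow_le_rpow_of_nonpos hp hbd
      exact ennreal_rpow_le_rpow_of_nonpos (one_div_nonpos.2 hp) (by gcongr)

lemma Mp_self (p : EReal) (hlam : lam ∈ Icc (0 : ℝ) 1) (a : ℝ≥0∞) : Mp p lam a a = a := by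
  rcases eq_or_ne a 0 with rfl | ha
  · exact Mp_of_eq_zero (Or.inl rfl)
  induction p with
  | bot => rw [Mp_bot ha ha, min_self]
  | top => rw [Mp_top ha ha, max_self]
  | coe r =>
    rcases eq_or_ne r 0 with rfl | hr
    · rw [EReal.coe_zero, Mp_zero ha ha,
        ← ENNReal.rpow_add_of_nonneg _ _ (sub_nonneg.2 hlam.2) hlam.1, sub_add_cancel,
        ENNReal.rpow_one]
    · rw [Mp_coe hr ha ha, ← add_mul, ofReal_one_sub_add_ofReal hlam, one_mul, one_div,
        ENNReal.rpow_rpow_inv hr]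

lemma min_le_Mp (hlam : lam ∈ Icc (0 : ℝ) 1) : min a b ≤ Mp p lam a b :=
  calc min a b = Mp p lam (min a b) (min a b) := (Mp_self p hlam _).symm
    _ ≤ Mp p lam a b := Mp_mono hlam (min_le_left a b) (min_le_right a b)

lemma Mp_le_max (hlam : lam ∈ Icc (0 : ℝ) 1) : Mp p lam a b ≤ max a b :=
  calc Mp p lam a b ≤ Mp p lam (max a b) (max a b) :=
        Mp_mono hlam (le_max_left a b) (le_max_right a b)
    _ = max a b := Mp_self p hlam _

lemma Mp_ne_zero (hlam : lam ∈ Icc (0 : ℝ) 1) (ha : a ≠ 0) (hb : b ≠ 0) : Mp p lam a b ≠ 0 :=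
  ((lt_min (pos_iff_ne_zero.2 ha) (pos_iff_ne_zero.2 hb)).trans_le (min_le_Mp hlam)).ne'

lemma Mp_ne_top (hlam : lam ∈ Icc (0 : ℝ) 1) (ha : a ≠ ⊤) (hb : b ≠ ⊤) : Mp p lam a b ≠ ⊤ :=
  ((Mp_le_max hlam).trans_lt (max_lt ha.lt_top hb.lt_top)).ne

lemma ennreal_mul_rpow_of_ne_zero_of_ne_top (ht : t ≠ 0) (ht' : t ≠ ⊤) (a : ℝ≥0∞) (r : ℝ) :
    (t * a) ^ r = t ^ r * a ^ r := by
  simp [ENNReal.mul_rpow_eq_ite, ht, ht']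

lemma Mp_mul_left (p : EReal) (lam : ℝ) (ht : t ≠ 0) (ht' : t ≠ ⊤) (a b : ℝ≥0∞) :
    Mp p lam (t * a) (t * b) = t * Mp p lam a b := by
  by_cases hab : a = 0 ∨ b = 0
  · rw [Mp_of_eq_zero hab, Mp_of_eq_zero (by simpa [ht] using hab), mul_zero]
  obtain ⟨ha, hb⟩ := not_or.1 hab
  have hta : t * a ≠ 0 := mul_ne_zero ht ha
  have htb : t * b ≠ 0 := mul_ne_zero ht hb
  induction p with
  | bot => rw [Mp_bot hta htb, Mp_bot ha hb, mul_min]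
  | top => rw [Mp_top hta htb, Mp_top ha hb, mul_max]
  | coe r =>
    rcases eq_or_ne r 0 with rfl | hr
    · rw [EReal.coe_zero, Mp_zero hta htb, Mp_zero ha hb,
        ennreal_mul_rpow_of_ne_zero_of_ne_top ht ht',
        ennreal_mul_rpow_of_ne_zero_of_ne_top ht ht', mul_mul_mul_comm,
        ← ENNReal.rpow_add _ _ ht ht', sub_add_cancel, ENNReal.rpow_one]
    · have htr : t ^ r ≠ 0 := (ENNReal.rpow_pos (pos_iff_ne_zero.2 ht) ht').ne'
      have htr' : t ^ r ≠ ⊤ := ENNReal.rpow_ne_top_of_ne_zero ht ht'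
      rw [Mp_coe hr hta htb, Mp_coe hr ha hb, ennreal_mul_rpow_of_ne_zero_of_ne_top ht ht',
        ennreal_mul_rpow_of_ne_zero_of_ne_top ht ht', mul_left_comm _ (t ^ r),
        mul_left_comm _ (t ^ r), ← mul_add, ennreal_mul_rpow_of_ne_zero_of_ne_top htr htr', one_div,
        ENNReal.rpow_rpow_inv hr]

lemma tendsto_Mp {ι : Type*} {l : Filter ι} {f g : ι → ℝ≥0∞} (p : EReal)
    (hlam : lam ∈ Ioo (0 : ℝ) 1) (hf : Tendsto f l (𝓝 a)) (hg : Tendsto g l (𝓝 b))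
    (ha : a ≠ 0) (hb : b ≠ 0) :
    Tendsto (fun i => Mp p lam (f i) (g i)) l (𝓝 (Mp p lam a b)) := by
  have hfg : ∀ᶠ i in l, f i ≠ 0 ∧ g i ≠ 0 := (hf.eventually_ne ha).and (hg.eventually_ne hb)
  induction p with
  | bot =>
    rw [Mp_bot ha hb]
    exact (hf.min hg).congr' (hfg.mono fun i hi => (Mp_bot hi.1 hi.2).symm)
  | top =>
    rw [Mp_top ha hb]
    exact (hf.max hg).congr' (hfg.mono fun i hi => (Mp_top hi.1 hi.2).symm)
  | coe r =>
    rcases eq_or_ne r 0 with rfl | hr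
    · rw [EReal.coe_zero, Mp_zero ha hb]
      have ha' : a ^ (1 - lam) ≠ 0 := by
        simp [ENNReal.rpow_eq_zero_iff_of_pos (sub_pos.2 hlam.2), ha]
      have hb' : b ^ lam ≠ 0 := by simp [ENNReal.rpow_eq_zero_iff_of_pos hlam.1, hb]
      exact (ENNReal.Tendsto.mul (hf.ennrpow_const _) (Or.inl ha') (hg.ennrpow_const _)
        (Or.inl hb')).congr' (hfg.mono fun i hi => (Mp_zero hi.1 hi.2).symm)
    · rw [Mp_coe hr ha hb]
      have ha' := ENNReal.Tendsto.const_mul (hf.ennrpow_const r)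
        (Or.inr (ENNReal.ofReal_ne_top (r := 1 - lam)))
      have hb' := ENNReal.Tendsto.const_mul (hg.ennrpow_const r)
        (Or.inr (ENNReal.ofReal_ne_top (r := lam)))
      exact ((ha'.add hb').ennrpow_const (1 / r)).congr'
        (hfg.mono fun i hi => (Mp_coe hr hi.1 hi.2).symm)

end Means

open Classical in
/-- The exponent `1 / (1 + p⁻¹) = p / (p + 1)` of the product space, for `p ≥ -1`. The limiting
values `0`, `1` and `-∞` at `p = 0`, `p = ∞` and `p = -1` are built in. -/
def productExponent (p : EReal) : EReal :=
  if p = 0 then 0 else if p = ⊤ then 1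
  else if p.toReal + 1 = 0 then ⊥ else ((p.toReal / (p.toReal + 1) : ℝ) : EReal)

section ProductExponent

variable {p : EReal} {lam r α β : ℝ} {a b u v w₁ w₂ : ℝ≥0∞}

lemma productExponent_zero : productExponent 0 = 0 := if_pos rfl

lemma productExponent_top : productExponent ⊤ = (1 : ℝ) := by
  simp [productExponent]

lemma productExponent_neg_one : productExponent ((-1 : ℝ) : EReal) = ⊥ := by
  simp [productExponent]

lemma productExponent_coe (hr : r ≠ 0) (hr' : r + 1 ≠ 0) :
    productExponent r = ((r / (r + 1) : ℝ) : EReal) := by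
  simp [productExponent, hr, hr']

lemma rpow_mul_rpow_le_add_of_add_eq_one (hα : 0 < α) (hβ : 0 < β) (hαβ : α + β = 1)
    (u v : ℝ≥0∞) : u ^ α * v ^ β ≤ ENNReal.ofReal α * u + ENNReal.ofReal β * v := by
  have hyoung := ENNReal.young_inequality (u ^ α) (v ^ β) (.inv_inv hα hβ hαβ)
  rwa [ENNReal.rpow_rpow_inv hα.ne', ENNReal.rpow_rpow_inv hβ.ne', ENNReal.ofReal_inv_of_pos hα,
    ENNReal.ofReal_inv_of_pos hβ, ENNReal.div_eq_inv_mul, ENNReal.div_eq_inv_mul, inv_inv,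
    inv_inv] at hyoung

lemma add_mul_rpow_mul_rpow_le (hα : 0 < α) (hβ : 0 < β) (hαβ : α + β = 1)
    (w₁ w₂ x₁ x₂ y₁ y₂ : ℝ≥0∞) :
    w₁ * (x₁ ^ α * y₁ ^ β) + w₂ * (x₂ ^ α * y₂ ^ β) ≤
      (w₁ * x₁ + w₂ * x₂) ^ α * (w₁ * y₁ + w₂ * y₂) ^ β := by
  have hsplit (w x y : ℝ≥0∞) : w * (x ^ α * y ^ β) = (w * x) ^ α * (w * y) ^ β := by
    rw [ENNReal.mul_rpow_of_nonneg _ _ hα.le, ENNReal.mul_rpow_of_nonneg _ _ hβ.le,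
      mul_mul_mul_comm, ← ENNReal.rpow_add_of_nonneg _ _ hα.le hβ.le, hαβ, ENNReal.rpow_one]
  have holder := ENNReal.inner_le_Lp_mul_Lq Finset.univ ![(w₁ * x₁) ^ α, (w₂ * x₂) ^ α]
    ![(w₁ * y₁) ^ β, (w₂ * y₂) ^ β] (.inv_inv hα hβ hαβ)
  simpa [hsplit, hα.ne', hβ.ne'] using holder

lemma powerMean_mul_le_of_pos (hr : 0 < r) (w₁ w₂ a b u v : ℝ≥0∞) :
    (w₁ * (a * u) ^ (r / (r + 1)) + w₂ * (b * v) ^ (r / (r + 1))) ^ (1 / (r / (r + 1))) ≤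
      (w₁ * a ^ r + w₂ * b ^ r) ^ (1 / r) * (w₁ * u + w₂ * v) := by
  have hq : 0 < r / (r + 1) := by positivity
  have holder := add_mul_rpow_mul_rpow_le (one_div_pos.2 (by positivity : 0 < r + 1)) hq
    (by field_simp; ring) w₁ w₂ (a ^ r) (b ^ r) u v
  rw [← ENNReal.rpow_mul, ← ENNReal.rpow_mul, mul_one_div,
    ← ENNReal.mul_rpow_of_nonneg _ _ hq.le, ← ENNReal.mul_rpow_of_nonneg _ _ hq.le] at holder
  calc _ ≤ ((w₁ * a ^ r + w₂ * b ^ r) ^ (1 / (r + 1)) *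
          (w₁ * u + w₂ * v) ^ (r / (r + 1))) ^ (1 / (r / (r + 1))) :=
        ENNReal.rpow_le_rpow holder (one_div_nonneg.2 hq.le)
    _ = _ := by
      rw [ENNReal.mul_rpow_of_nonneg _ _ (one_div_nonneg.2 hq.le), ← ENNReal.rpow_mul,
        one_div (r / _), ENNReal.rpow_rpow_inv hq.ne',
        show 1 / (r + 1) * (r / (r + 1))⁻¹ = 1 / r by field_simp]

lemma powerMean_mul_le_of_neg (hr : -1 < r) (hr' : r < 0)
    (ha : a ≠ 0) (hb : b ≠ 0) (hu : u ≠ 0) (hu' : u ≠ ⊤) (hv : v ≠ 0) (hv' : v ≠ ⊤)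
    (hU : w₁ * u + w₂ * v ≠ 0) (hU' : w₁ * u + w₂ * v ≠ ⊤) :
    (w₁ * (a * u) ^ (r / (r + 1)) + w₂ * (b * v) ^ (r / (r + 1))) ^ (1 / (r / (r + 1))) ≤
      (w₁ * a ^ r + w₂ * b ^ r) ^ (1 / r) * (w₁ * u + w₂ * v) := by
  have hr1 : 0 < r + 1 := by linarith
  set S := w₁ * (a * u) ^ (r / (r + 1)) + w₂ * (b * v) ^ (r / (r + 1))
  set U := w₁ * u + w₂ * v
  -- Since `r < 0`, Hölder's inequality has to split `c ^ r` rather than the power of `c * z`.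
  have hcancel {c z : ℝ≥0∞} (hc : c ≠ 0) (hz : z ≠ 0) (hz' : z ≠ ⊤) :
      ((c * z) ^ (r / (r + 1))) ^ (r + 1) * z ^ (-r) = c ^ r := by
    rw [← ENNReal.rpow_mul, div_mul_cancel₀ r hr1.ne', ENNReal.mul_rpow_of_ne_zero hc hz,
      mul_assoc, ← ENNReal.rpow_add _ _ hz hz', add_neg_cancel, ENNReal.rpow_zero, mul_one]
  have holder : w₁ * a ^ r + w₂ * b ^ r ≤ S ^ (r + 1) * U ^ (-r) := by
    simpa only [hcancel ha hu hu', hcancel hb hv hv'] using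
      add_mul_rpow_mul_rpow_le hr1 (neg_pos.2 hr') (by ring) w₁ w₂ ((a * u) ^ (r / (r + 1)))
        ((b * v) ^ (r / (r + 1))) u v
  have hpow : U⁻¹ * S ^ (1 / (r / (r + 1))) = (U ^ (-r) * S ^ (r + 1)) ^ (1 / r) := by
    rw [ennreal_mul_rpow_of_ne_zero_of_ne_top (ENNReal.rpow_pos (pos_iff_ne_zero.2 hU) hU').ne'
        (ENNReal.rpow_ne_top_of_ne_zero hU hU'), ← ENNReal.rpow_mul, ← ENNReal.rpow_mul,
      mul_one_div, neg_div, div_self hr'.ne, ENNReal.rpow_neg_one, mul_one_div, one_div_div]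
  rw [← ENNReal.div_le_iff hU hU', ENNReal.div_eq_inv_mul, hpow, mul_comm]
  exact ennreal_rpow_le_rpow_of_nonpos (one_div_nonpos.2 hr'.le) holder

lemma min_mul_le_harmonic_mean_mul (hU : w₁ * u + w₂ * v ≠ 0) (hU' : w₁ * u + w₂ * v ≠ ⊤) :
    min (a * u) (b * v) ≤ (w₁ * a⁻¹ + w₂ * b⁻¹)⁻¹ * (w₁ * u + w₂ * v) := by
  rw [← ENNReal.div_eq_inv_mul, ENNReal.le_div_iff_mul_le (Or.inr hU) (Or.inr hU')]
  have hcancel (c z : ℝ≥0∞) : c * z * c⁻¹ ≤ z := by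
    rw [mul_right_comm]
    exact mul_le_of_le_one_left' (ENNReal.mul_inv_le_one c)
  calc min (a * u) (b * v) * (w₁ * a⁻¹ + w₂ * b⁻¹)
      = w₁ * (min (a * u) (b * v) * a⁻¹) + w₂ * (min (a * u) (b * v) * b⁻¹) := by ring
    _ ≤ w₁ * (a * u * a⁻¹) + w₂ * (b * v * b⁻¹) := by
        gcongr
        exacts [min_le_left _ _, min_le_right _ _]
    _ ≤ w₁ * u + w₂ * v := by gcongr <;> exact hcancel _ _

lemma Mp_productExponent_coe_mul_le (hlam : lam ∈ Ioo (0 : ℝ) 1) (hr : -1 ≤ r)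
    (ha : a ≠ 0) (hb : b ≠ 0) (hu : u ≠ 0) (hu' : u ≠ ⊤) (hv : v ≠ 0) (hv' : v ≠ ⊤) :
    Mp (productExponent r) lam (a * u) (b * v) ≤
      Mp r lam a b * (ENNReal.ofReal (1 - lam) * u + ENNReal.ofReal lam * v) := by
  have hau : a * u ≠ 0 := mul_ne_zero ha hu
  have hbv : b * v ≠ 0 := mul_ne_zero hb hv
  have hU : ENNReal.ofReal (1 - lam) * u + ENNReal.ofReal lam * v ≠ 0 := by
    simp [hlam.2, hu]
  have hU' : ENNReal.ofReal (1 - lam) * u + ENNReal.ofReal lam * v ≠ ⊤ := by finiteness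
  rcases lt_trichotomy r 0 with hneg | rfl | hpos
  · rcases hr.eq_or_lt with rfl | hr
    · rw [productExponent_neg_one, Mp_bot hau hbv, Mp_coe hneg.ne ha hb, div_neg, one_div_one]
      simpa only [ENNReal.rpow_neg_one] using min_mul_le_harmonic_mean_mul hU hU'
    · have hr1 : r + 1 ≠ 0 := by linarith
      rw [productExponent_coe hneg.ne hr1, Mp_coe (div_ne_zero hneg.ne hr1) hau hbv,
        Mp_coe hneg.ne ha hb]
      exact powerMean_mul_le_of_neg hr hneg ha hb hu hu' hv hv' hU hU'
  · rw [EReal.coe_zero, productExponent_zero, Mp_zero hau hbv, Mp_zero ha hb,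
      ENNReal.mul_rpow_of_nonneg _ _ (sub_pos.2 hlam.2).le,
      ENNReal.mul_rpow_of_nonneg _ _ hlam.1.le, mul_mul_mul_comm]
    gcongr
    exact rpow_mul_rpow_le_add_of_add_eq_one (sub_pos.2 hlam.2) hlam.1 (sub_add_cancel _ _) u v
  · have hr1 : r + 1 ≠ 0 := by positivity
    rw [productExponent_coe hpos.ne' hr1, Mp_coe (div_ne_zero hpos.ne' hr1) hau hbv,
      Mp_coe hpos.ne' ha hb]
    exact powerMean_mul_le_of_pos hpos _ _ _ _ _ _

lemma Mp_productExponent_top_mul_le (ha : a ≠ 0) (hb : b ≠ 0) (hu : u ≠ 0) (hv : v ≠ 0) :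
    Mp (productExponent ⊤) lam (a * u) (b * v) ≤
      Mp ⊤ lam a b * (ENNReal.ofReal (1 - lam) * u + ENNReal.ofReal lam * v) := by
  rw [productExponent_top, Mp_coe one_ne_zero (mul_ne_zero ha hu) (mul_ne_zero hb hv),
    Mp_top ha hb, one_div_one, ENNReal.rpow_one, ENNReal.rpow_one, ENNReal.rpow_one, mul_add,
    mul_left_comm (max a b), mul_left_comm (max a b)]
  gcongr
  exacts [le_max_left _ _, le_max_right _ _]

lemma Mp_productExponent_mul_le (hlam : lam ∈ Ioo (0 : ℝ) 1) (hp : -1 ≤ p) (a b u v : ℝ≥0∞) :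
    Mp (productExponent p) lam (a * u) (b * v) ≤
      Mp p lam a b * (ENNReal.ofReal (1 - lam) * u + ENNReal.ofReal lam * v) := by
  by_cases hzero : a * u = 0 ∨ b * v = 0
  · simp only [Mp_of_eq_zero hzero, zero_le]
  simp only [mul_eq_zero, not_or] at hzero
  obtain ⟨⟨ha, hu⟩, hb, hv⟩ := hzero
  by_cases htop : u = ⊤ ∨ v = ⊤
  · have hU : ENNReal.ofReal (1 - lam) * u + ENNReal.ofReal lam * v = ⊤ := by
      rcases htop with rfl | rfl <;> simp [ENNReal.mul_top, hlam.1, hlam.2]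
    rw [hU, ENNReal.mul_top (Mp_ne_zero (Ioo_subset_Icc_self hlam) ha hb)]
    exact le_top
  obtain ⟨hu', hv'⟩ := not_or.1 htop
  induction p with
  | bot => exact absurd hp (EReal.bot_lt_coe (-1)).not_ge
  | top => exact Mp_productExponent_top_mul_le ha hb hu hv
  | coe r =>
    have hr : -1 ≤ r := EReal.coe_le_coe_iff.1 hp
    exact Mp_productExponent_coe_mul_le hlam hr ha hb hu hu' hv hv'

end ProductExponent

section LayerCake

variable {Ω : Type*} [MeasurableSpace Ω] {μ : Measure Ω} {φ : Ω → ℝ≥0∞} {c : ℝ≥0∞}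

lemma lintegral_eq_setLIntegral_measure_le_of_le_one (hφ : AEMeasurable φ μ)
    (hφ_le : ∀ x, φ x ≤ 1) :
    ∫⁻ x, φ x ∂μ = ∫⁻ t in Ioo (0 : ℝ) 1, μ {x | ENNReal.ofReal t ≤ φ x} := by
  have hφ_fin (x : Ω) : φ x ≠ ⊤ := ((hφ_le x).trans_lt ENNReal.one_lt_top).ne
  have hcake : ∫⁻ x, φ x ∂μ = ∫⁻ t in Ioi (0 : ℝ), μ {x | ENNReal.ofReal t ≤ φ x} := by
    simpa only [ENNReal.ofReal_toReal (hφ_fin _), ← ENNReal.ofReal_le_iff_le_toReal (hφ_fin _)]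
      using lintegral_eq_lintegral_meas_le μ (ae_of_all _ fun _ => ENNReal.toReal_nonneg)
        hφ.ennreal_toReal
  have htail : ∫⁻ t in Ioi (1 : ℝ), μ {x | ENNReal.ofReal t ≤ φ x} = 0 := by
    refine setLIntegral_eq_zero measurableSet_Ioi fun t ht => ?_
    have hempty : {x | ENNReal.ofReal t ≤ φ x} = ∅ :=
      eq_empty_of_forall_notMem fun x hx =>
        ((hφ_le x).trans_lt (ENNReal.one_lt_ofReal.2 ht)).not_ge hx
    simp only [hempty, measure_empty, Pi.zero_apply]
  rw [hcake, ← Ioc_union_Ioi_eq_Ioi (zero_le_one' ℝ),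
    lintegral_union measurableSet_Ioi (Ioc_disjoint_Ioi le_rfl), htail, add_zero]
  exact setLIntegral_congr Ioo_ae_eq_Ioc.symm

lemma lintegral_eq_mul_setLIntegral_measure_mul_le (hφ : AEMeasurable φ μ) (hc : c ≠ ⊤)
    (hφ_le : ∀ x, φ x ≤ c) :
    ∫⁻ x, φ x ∂μ = c * ∫⁻ t in Ioo (0 : ℝ) 1, μ {x | ENNReal.ofReal t * c ≤ φ x} := by
  rcases eq_or_ne c 0 with rfl | hc0
  · simp only [fun x => le_zero_iff.1 (hφ_le x), lintegral_zero, zero_mul]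
  have hcake := lintegral_eq_setLIntegral_measure_le_of_le_one (hφ.div_const c)
    fun x => ENNReal.div_le_of_le_mul ((hφ_le x).trans_eq (one_mul c).symm)
  simp only [ENNReal.le_div_iff_mul_le (Or.inl hc0) (Or.inl hc)] at hcake
  rw [← hcake, ← lintegral_const_mul' _ _ hc]
  simp only [ENNReal.mul_div_cancel hc0 hc]

lemma mul_setLIntegral_measure_mul_le_lintegral (hφ : AEMeasurable φ μ) (hc : c ≠ ⊤) :
    c * ∫⁻ t in Ioo (0 : ℝ) 1, μ {x | ENNReal.ofReal t * c ≤ φ x} ≤ ∫⁻ x, φ x ∂μ := by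
  calc c * ∫⁻ t in Ioo (0 : ℝ) 1, μ {x | ENNReal.ofReal t * c ≤ φ x}
      = c * ∫⁻ t in Ioo (0 : ℝ) 1, μ {x | ENNReal.ofReal t * c ≤ min (φ x) c} := by
        congr 1
        refine setLIntegral_congr_fun measurableSet_Ioo fun t ht => ?_
        have hle : ENNReal.ofReal t * c ≤ c :=
          mul_le_of_le_one_left' (ENNReal.ofReal_le_one.2 ht.2.le)
        simp only [le_min_iff, hle, and_true]
    _ = ∫⁻ x, min (φ x) c ∂μ :=
        (lintegral_eq_mul_setLIntegral_measure_mul_le (hφ.min aemeasurable_const) hc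
          fun _ => min_le_right _ _).symm
    _ ≤ ∫⁻ x, φ x ∂μ := lintegral_mono fun _ => min_le_left _ _

lemma measurable_measure_ofReal_mul_le (μ : Measure Ω) (φ : Ω → ℝ≥0∞) (c : ℝ≥0∞) :
    Measurable fun t : ℝ => μ {x | ENNReal.ofReal t * c ≤ φ x} :=
  Antitone.measurable fun _ _ hst => measure_mono fun _ hx =>
    (mul_le_mul_left (ENNReal.ofReal_le_ofReal hst) c).trans hx

end LayerCake

lemma nonempty_ofReal_mul_iSup_le {ι : Type*} {f : ι → ℝ≥0∞} {t : ℝ} (ht : t < 1)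
    (hf : ⨆ x, f x ≠ 0) (hf' : ⨆ x, f x ≠ ⊤) :
    {x | ENNReal.ofReal t * ⨆ y, f y ≤ f x}.Nonempty := by
  have hlt : ENNReal.ofReal t * ⨆ y, f y < ⨆ y, f y := by
    simpa only [one_mul] using
      ENNReal.mul_lt_mul_left hf hf' (ENNReal.ofReal_lt_one.2 ht)
  obtain ⟨x, hx⟩ := lt_iSup_iff.1 hlt
  exact ⟨x, hx.le⟩

namespace SatisfiesBMbarLinear

variable {X : Type*} [MeasurableSpace X] {d : X → X → ℝ} {μ : Measure X} {p : EReal} {lam t : ℝ}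
  {f g h : X → ℝ≥0∞}

lemma add_measure_superlevel_le (hX : SatisfiesBMbarLinear d μ) (hlam : lam ∈ Ioo (0 : ℝ) 1)
    (ht : t ∈ Ioo (0 : ℝ) 1) (hf : Measurable f) (hg : Measurable g)
    (hf0 : ⨆ x, f x ≠ 0) (hf_top : ⨆ x, f x ≠ ⊤) (hg0 : ⨆ x, g x ≠ 0) (hg_top : ⨆ x, g x ≠ ⊤)
    (hfgh : ∀ x y z, d z x = lam * d x y → d z y = (1 - lam) * d x y →
      Mp p lam (f x) (g y) ≤ h z) :
    ENNReal.ofReal (1 - lam) * μ {x | ENNReal.ofReal t * ⨆ y, f y ≤ f x} +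
        ENNReal.ofReal lam * μ {x | ENNReal.ofReal t * ⨆ y, g y ≤ g x} ≤
      μ {z | ENNReal.ofReal t * Mp p lam (⨆ y, f y) (⨆ y, g y) ≤ h z} := by
  rw [← measure_toMeasurable {z | _ ≤ h z}]
  refine hX lam hlam _ _ _ (nonempty_ofReal_mul_iSup_le ht.2 hf0 hf_top)
    (nonempty_ofReal_mul_iSup_le ht.2 hg0 hg_top) (measurableSet_le measurable_const hf)
    (measurableSet_le measurable_const hg) (measurableSet_toMeasurable _ _)
    (Subset.trans ?_ (subset_toMeasurable _ _))
  rintro z ⟨x, hx, y, hy, hzx, hzy⟩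
  calc ENNReal.ofReal t * Mp p lam (⨆ y, f y) (⨆ y, g y)
      = Mp p lam (ENNReal.ofReal t * ⨆ y, f y) (ENNReal.ofReal t * ⨆ y, g y) :=
        (Mp_mul_left p lam (ENNReal.ofReal_pos.2 ht.1).ne' ENNReal.ofReal_ne_top _ _).symm
    _ ≤ Mp p lam (f x) (g y) := Mp_mono (Ioo_subset_Icc_self hlam) hx hy
    _ ≤ h z := hfgh x y z hzx hzy

lemma Mp_lintegral_le (hX : SatisfiesBMbarLinear d μ) (hp : -1 ≤ p)
    (hlam : lam ∈ Ioo (0 : ℝ) 1) (hf : Measurable f) (hg : Measurable g) (hh : AEMeasurable h μ)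
    (hf_top : ⨆ x, f x ≠ ⊤) (hg_top : ⨆ x, g x ≠ ⊤)
    (hfgh : ∀ x y z, d z x = lam * d x y → d z y = (1 - lam) * d x y →
      Mp p lam (f x) (g y) ≤ h z) :
    Mp (productExponent p) lam (∫⁻ x, f x ∂μ) (∫⁻ x, g x ∂μ) ≤ ∫⁻ x, h x ∂μ := by
  set F := ⨆ x, f x
  set G := ⨆ x, g x
  set M := Mp p lam F G
  rw [lintegral_eq_mul_setLIntegral_measure_mul_le hf.aemeasurable hf_top (le_iSup f),
    lintegral_eq_mul_setLIntegral_measure_mul_le hg.aemeasurable hg_top (le_iSup g)]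
  by_cases hzero : F = 0 ∨ G = 0
  · rw [Mp_of_eq_zero (hzero.imp (by simp [·]) (by simp [·]))]
    exact zero_le
  obtain ⟨hF, hG⟩ := not_or.1 hzero
  set φ := fun t : ℝ => μ {x | ENNReal.ofReal t * F ≤ f x}
  set ψ := fun t : ℝ => μ {x | ENNReal.ofReal t * G ≤ g x}
  calc Mp (productExponent p) lam (F * ∫⁻ t in Ioo 0 1, φ t) (G * ∫⁻ t in Ioo 0 1, ψ t)
      ≤ M * (ENNReal.ofReal (1 - lam) * (∫⁻ t in Ioo 0 1, φ t) +
          ENNReal.ofReal lam * ∫⁻ t in Ioo 0 1, ψ t) := Mp_productExponent_mul_le hlam hp _ _ _ _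
    _ = M * ∫⁻ t in Ioo 0 1, ENNReal.ofReal (1 - lam) * φ t + ENNReal.ofReal lam * ψ t := by
        rw [lintegral_add_left ((measurable_measure_ofReal_mul_le μ f F).const_mul _),
          lintegral_const_mul' _ _ ENNReal.ofReal_ne_top,
          lintegral_const_mul' _ _ ENNReal.ofReal_ne_top]
    _ ≤ M * ∫⁻ t in Ioo (0 : ℝ) 1, μ {x | ENNReal.ofReal t * M ≤ h x} := by
        gcongr M * ?_
        exact setLIntegral_mono' measurableSet_Ioo fun t ht =>
          hX.add_measure_superlevel_le hlam ht hf hg hF hf_top hG hg_top hfgh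
    _ ≤ ∫⁻ x, h x ∂μ :=
        mul_setLIntegral_measure_mul_le_lintegral hh
          (Mp_ne_top (Ioo_subset_Icc_self hlam) hf_top hg_top)

end SatisfiesBMbarLinear

section Product

variable {X Y : Type*}

section Metric

variable [PseudoMetricSpace X] [PseudoMetricSpace Y]

lemma rho_eq_mul_rho {a b c d : X × Y} {k : ℝ} (hk : 0 ≤ k)
    (h₁ : dist a.1 b.1 = k * dist c.1 d.1) (h₂ : dist a.2 b.2 = k * dist c.2 d.2) :
    rho a b = k * rho c d := by
  rw [rho, h₁, h₂, mul_pow, mul_pow, ← mul_add, Real.sqrt_mul (sq_nonneg k), Real.sqrt_sq hk, rho]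

lemma starComb_section_subset {lam : ℝ} (hlam : lam ∈ Icc (0 : ℝ) 1) {K L C : Set (X × Y)}
    (hC : starComb rho lam K L ⊆ C) {x y z : X} (hzx : dist z x = lam * dist x y)
    (hzy : dist z y = (1 - lam) * dist x y) :
    starComb dist lam (Prod.mk x ⁻¹' K) (Prod.mk y ⁻¹' L) ⊆ Prod.mk z ⁻¹' C := by
  rintro w ⟨a, ha, b, hb, hwa, hwb⟩
  exact hC ⟨(x, a), ha, (y, b), hb, rho_eq_mul_rho hlam.1 hzx hwa,
    rho_eq_mul_rho (sub_nonneg.2 hlam.2) hzy hwb⟩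

lemma Mp_measure_section_le [MeasurableSpace X] [MeasurableSpace Y] {μY : Measure Y} {p : EReal}
    {lam : ℝ} (hlam : lam ∈ Ioo (0 : ℝ) 1)
    (hY : SatisfiesBM (dist : Y → Y → ℝ) μY p) {K L C : Set (X × Y)} (hK : MeasurableSet K)
    (hL : MeasurableSet L) (hC : MeasurableSet C) (hKLC : starComb rho lam K L ⊆ C) {x y z : X}
    (hzx : dist z x = lam * dist x y) (hzy : dist z y = (1 - lam) * dist x y) :
    Mp p lam (μY (Prod.mk x ⁻¹' K)) (μY (Prod.mk y ⁻¹' L)) ≤ μY (Prod.mk z ⁻¹' C) := by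
  by_cases hzero : μY (Prod.mk x ⁻¹' K) = 0 ∨ μY (Prod.mk y ⁻¹' L) = 0
  · simp only [Mp_of_eq_zero hzero, zero_le]
  obtain ⟨hK0, hL0⟩ := not_or.1 hzero
  exact hY lam hlam _ _ _ (nonempty_of_measure_ne_zero hK0) (nonempty_of_measure_ne_zero hL0)
    (measurable_prodMk_left hK) (measurable_prodMk_left hL) (measurable_prodMk_left hC) hK0 hL0
    (starComb_section_subset (Ioo_subset_Icc_self hlam) hKLC hzx hzy)

end Metric

section ProductMeasure

variable [MeasurableSpace X] [MeasurableSpace Y] {μX : Measure X} {μY : Measure Y}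
  {S : Set (X × Y)}

-- `Measure.prod` is the zero measure when `x ↦ δ_x × μY` is not a.e. measurable; this can only
-- happen if `μY` is not s-finite.
lemma aemeasurable_map_prodMk_of_prod_ne_zero (hprod : μX.prod μY ≠ 0) :
    AEMeasurable (fun x => μY.map (Prod.mk x)) μX := by
  contrapose! hprod
  rw [Measure.prod_def, Measure.bind, Measure.map_of_not_aemeasurable hprod, Measure.join_zero]

lemma prod_apply_of_aemeasurable (hae : AEMeasurable (fun x => μY.map (Prod.mk x)) μX)
    (hS : MeasurableSet S) : μX.prod μY S = ∫⁻ x, μY (Prod.mk x ⁻¹' S) ∂μX := by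
  simp only [Measure.prod_def, Measure.bind_apply hS hae,
    Measure.map_apply measurable_prodMk_left hS]

lemma aemeasurable_measure_section (hae : AEMeasurable (fun x => μY.map (Prod.mk x)) μX)
    (hS : MeasurableSet S) : AEMeasurable (fun x => μY (Prod.mk x ⁻¹' S)) μX := by
  simpa only [Function.comp_def, Measure.map_apply measurable_prodMk_left hS] using
    (Measure.measurable_coe hS).comp_aemeasurable hae

end ProductMeasure

section CompactSets

variable [MetricSpace X] [MetricSpace Y] [MeasurableSpace X] [OpensMeasurableSpace X]
  [MeasurableSpace Y] [OpensMeasurableSpace Y] {K : Set (X × Y)}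

-- The product `σ`-algebra need not contain all open sets, but on the product of the projections
-- of `K`, which are second countable, it does.
lemma measurableSet_prod_of_isCompact (hK : IsCompact K) : MeasurableSet K := by
  have hK₁ : IsCompact (Prod.fst '' K) := hK.image continuous_fst
  have hK₂ : IsCompact (Prod.snd '' K) := hK.image continuous_snd
  have := isCompact_iff_compactSpace.1 hK₁
  let ι : (Prod.fst '' K) × (Prod.snd '' K) → X × Y := Prod.map Subtype.val Subtype.val
  have hι : MeasurableEmbedding ι := (MeasurableEmbedding.subtype_coe hK₁.measurableSet).prodMap
    (MeasurableEmbedding.subtype_coe hK₂.measurableSet)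
  have hKι : K ⊆ range ι := fun z hz =>
    ⟨(⟨z.1, mem_image_of_mem _ hz⟩, ⟨z.2, mem_image_of_mem _ hz⟩), rfl⟩
  rw [← image_preimage_eq_of_subset hKι]
  have hι_cont : Continuous ι := continuous_subtype_val.prodMap continuous_subtype_val
  exact hι.measurableSet_image.2 (hK.isClosed.preimage hι_cont).measurableSet

lemma measurable_measure_section_of_isCompact (μY : Measure Y) [IsLocallyFiniteMeasure μY]
    (hK : IsCompact K) : Measurable fun x => μY (Prod.mk x ⁻¹' K) := by
  have hfin : Fact (μY (Prod.snd '' K) < ⊤) := ⟨(hK.image continuous_snd).measure_lt_top⟩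
  have hsub (x : X) : Prod.mk x ⁻¹' K ⊆ Prod.snd '' K := fun y hy => ⟨(x, y), hy, rfl⟩
  simpa only [Measure.restrict_eq_self μY (hsub _)] using
    measurable_measure_prodMk_left (ν := μY.restrict (Prod.snd '' K))
      (measurableSet_prod_of_isCompact hK)

end CompactSets

lemma iSup_measure_section_ne_top_of_isCompact [TopologicalSpace X] [TopologicalSpace Y]
    [MeasurableSpace Y] (μY : Measure Y) [IsLocallyFiniteMeasure μY] {K : Set (X × Y)}
    (hK : IsCompact K) : ⨆ x, μY (Prod.mk x ⁻¹' K) ≠ ⊤ := by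
  have hsub (x : X) : Prod.mk x ⁻¹' K ⊆ Prod.snd '' K := fun y hy => ⟨(x, y), hy, rfl⟩
  exact ((iSup_le fun x => measure_mono (hsub x)).trans_lt
    (hK.image continuous_snd).measure_lt_top).ne

end Product

lemma exists_seq_isCompact_subset_tendsto_measure {Z : Type*} [TopologicalSpace Z]
    [MeasurableSpace Z] (μ : Measure Z) [μ.InnerRegular] {A : Set Z} (hA : MeasurableSet A)
    (hA0 : μ A ≠ 0) :
    ∃ K : ℕ → Set Z, (∀ n, K n ⊆ A) ∧ (∀ n, IsCompact (K n)) ∧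
      Tendsto (fun n => μ (K n)) atTop (𝓝 (μ A)) := by
  obtain ⟨w, -, hw, hw_tendsto⟩ := exists_seq_strictMono_tendsto' (pos_iff_ne_zero.2 hA0)
  choose K hKA hK hwK using fun n => hA.exists_lt_isCompact (hw n).2
  exact ⟨K, hKA, hK, tendsto_of_tendsto_of_tendsto_of_le_of_le hw_tendsto tendsto_const_nhds
    (fun n => (hwK n).le) fun n => measure_mono (hKA n)⟩

lemma starComb_mono {Z : Type*} {d : Z → Z → ℝ} {lam : ℝ} {A A' B B' : Set Z} (hA : A ⊆ A')
    (hB : B ⊆ B') : starComb d lam A B ⊆ starComb d lam A' B' :=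
  fun _ ⟨a, ha, b, hb, hz⟩ => ⟨a, hA ha, b, hB hb, hz⟩

section BrunnMinkowski

variable {X Y : Type*} [MetricSpace X] [MetricSpace Y]
  [MeasurableSpace X] [OpensMeasurableSpace X] [MeasurableSpace Y] [OpensMeasurableSpace Y]
  {μX : Measure X} {μY : Measure Y} [IsLocallyFiniteMeasure μY] {p : EReal}

lemma Mp_prod_le_of_isCompact (hp : -1 ≤ p) (hX : SatisfiesBMbarLinear (dist : X → X → ℝ) μX)
    (hY : SatisfiesBM (dist : Y → Y → ℝ) μY p)
    (hae : AEMeasurable (fun x => μY.map (Prod.mk x)) μX) {lam : ℝ} (hlam : lam ∈ Ioo (0 : ℝ) 1)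
    {K L C : Set (X × Y)} (hK : IsCompact K) (hL : IsCompact L) (hC : MeasurableSet C)
    (hKLC : starComb rho lam K L ⊆ C) :
    Mp (productExponent p) lam (μX.prod μY K) (μX.prod μY L) ≤ μX.prod μY C := by
  have hK_meas := measurableSet_prod_of_isCompact hK
  have hL_meas := measurableSet_prod_of_isCompact hL
  rw [prod_apply_of_aemeasurable hae hK_meas, prod_apply_of_aemeasurable hae hL_meas,
    prod_apply_of_aemeasurable hae hC]
  exact hX.Mp_lintegral_le hp hlam (measurable_measure_section_of_isCompact μY hK)
    (measurable_measure_section_of_isCompact μY hL) (aemeasurable_measure_section hae hC)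
    (iSup_measure_section_ne_top_of_isCompact μY hK)
    (iSup_measure_section_ne_top_of_isCompact μY hL)
    fun _ _ _ => Mp_measure_section_le hlam hY hK_meas hL_meas hC hKLC

theorem statement1_general [(μX.prod μY).InnerRegular] (hp : -1 ≤ p)
    (hX : SatisfiesBMbarLinear (dist : X → X → ℝ) μX)
    (hY : SatisfiesBM (dist : Y → Y → ℝ) μY p) :
    SatisfiesBM (rho : X × Y → X × Y → ℝ) (μX.prod μY) (productExponent p) := by
  intro lam hlam A B C _ _ hA hB hC hA0 hB0 hABC
  have hae : AEMeasurable (fun x => μY.map (Prod.mk x)) μX :=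
    aemeasurable_map_prodMk_of_prod_ne_zero fun hprod =>
      hA0 (by rw [hprod, Measure.coe_zero, Pi.zero_apply])
  obtain ⟨K, hKA, hK, hK_tendsto⟩ := exists_seq_isCompact_subset_tendsto_measure _ hA hA0
  obtain ⟨L, hLB, hL, hL_tendsto⟩ := exists_seq_isCompact_subset_tendsto_measure _ hB hB0
  refine le_of_tendsto' (tendsto_Mp _ hlam hK_tendsto hL_tendsto hA0 hB0) fun n => ?_
  exact Mp_prod_le_of_isCompact hp hX hY hae hlam (hK n) (hL n) hC
    ((starComb_mono (hKA n) (hLB n)).trans hABC)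

end BrunnMinkowski

open Classical in
/-- Theorem B / `t:BM_ProdMetSpa`: if `X` satisfies `B̄M(1)` and `Y`
satisfies `BM(p)` for some `p ≥ -1`, then `X × Y` with the product metric `ρ` and the
product measure satisfies `BM(1/(1+p⁻¹))`. -/
theorem statement1 {X Y : Type*} [MetricSpace X] [MetricSpace Y]
    [MeasurableSpace X] [OpensMeasurableSpace X] [MeasurableSpace Y] [OpensMeasurableSpace Y]
    (μX : Measure X) (μY : Measure Y) [SigmaFinite μX] [IsLocallyFiniteMeasure μY]
    [IsLocallyFiniteMeasure (μX.prod μY)]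
    (hdX : StrictlyIntrinsicDist (dist : X → X → ℝ))
    (hdY : StrictlyIntrinsicDist (dist : Y → Y → ℝ))
    (hRadon : (μX.prod μY).InnerRegular)
    (p : EReal) (hp : (-1 : EReal) ≤ p)
    (hX : SatisfiesBMbarLinear (dist : X → X → ℝ) μX)
    (hY : SatisfiesBM (dist : Y → Y → ℝ) μY p) :
    SatisfiesBM (rho : X × Y → X × Y → ℝ) (μX.prod μY)
      (if p = 0 then (0 : EReal) else if p = ⊤ then (1 : EReal)
       else if p.toReal + 1 = 0 then (⊥ : EReal)
       else ((p.toReal / (p.toReal + 1) : ℝ) : EReal)) := by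
  exact statement1_general hp hX hY

end
end

section
/- Let (X,d_X,μ_X) and (Y,d_Y,μ_Y) be metric measure spaces with μ_X and μ_Y σ-finite, such that (X,d_X,μ_X) satisfies the general inequality B̄M(1) and (Y,d_Y,μ_Y) satisfies PL. Let μ be the measure on X×Y given by dμ(x,y)=φ(x,y)dμ_{X×Y}(x,y) where φ is log-concave with respect to the product metric ρ. Let λ∈(0,1) and let A,B⊆X×Y be non-empty measurable sets such that (1−λ)A⋆λB is also measurable and sup_{x∈X} ∫_Y χ_A(x,y)φ(x,y)dμ_Y(y) = sup_{x∈X} ∫_Y χ_B(x,y)φ(x,y)dμ_Y(y). Then μ((1−λ)A⋆λB) ≥ (1−λ)μ(A) + λμ(B). -/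
open MeasureTheory Set Metric Filter
open scoped ENNReal NNReal Topology Pointwise

noncomputable section

/-!
Write `F`, `G`, `H` for the `φ`-weighted measures of the sections of `A`, `B` and
`(1 - lam) A ⋆ lam B`. A pair of metric `lam`-combinations in the two factors is a
`lam`-combination for `rho`, so log-concavity of `φ` and Prékopa–Leindler on `Y` give
`F x₁ ^ (1 - lam) * G x₂ ^ lam ≤ H z` whenever `z` is a `lam`-combination of `x₁` and `x₂`.
Hence `{t < H}` contains the combination of `{t < F}` and `{t < G}` for every `t`. As
`F` and `G` have the same supremum, these two superlevel sets are nonempty for the same `t`, so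
the linear Brunn–Minkowski inequality on `X` applies level by level, and it integrates over `t` by
the layer cake formula.
-/

section GeometricMean

variable {Z : Type*} {d : Z → Z → ℝ} {lam : ℝ}

/-- The pointwise hypothesis of the Prékopa–Leindler inequality at weight `lam`. For
`f = g = h = φ` it is the log-concavity of `φ` at weight `lam`. -/
def GeomMeanLE (d : Z → Z → ℝ) (lam : ℝ) (f g h : Z → ℝ≥0∞) : Prop :=
  ∀ x y z : Z, d z x = lam * d x y → d z y = (1 - lam) * d x y →
    f x ^ (1 - lam) * g y ^ lam ≤ h z

theorem min_le_rpow_mul_rpow (hlam : lam ∈ Icc (0 : ℝ) 1) (a b : ℝ≥0∞) :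
    min a b ≤ a ^ (1 - lam) * b ^ lam := by
  have one_sub_nonneg : 0 ≤ 1 - lam := sub_nonneg.2 hlam.2
  calc min a b = min a b ^ (1 - lam) * min a b ^ lam := by
        rw [← ENNReal.rpow_add_of_nonneg _ _ one_sub_nonneg hlam.1, sub_add_cancel,
          ENNReal.rpow_one]
    _ ≤ a ^ (1 - lam) * b ^ lam :=
        mul_le_mul' (ENNReal.rpow_le_rpow (min_le_left a b) one_sub_nonneg)
          (ENNReal.rpow_le_rpow (min_le_right a b) hlam.1)

theorem GeomMeanLE.starComb_superlevel_subset {f g h : Z → ℝ≥0∞}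
    (hfgh : GeomMeanLE d lam f g h) (hlam : lam ∈ Icc (0 : ℝ) 1) (t : ℝ≥0∞) :
    starComb d lam {x | t < f x} {x | t < g x} ⊆ {x | t < h x} := by
  rintro z ⟨x, hx, y, hy, hzx, hzy⟩
  calc t < min (f x) (g y) := lt_min hx hy
    _ ≤ f x ^ (1 - lam) * g y ^ lam := min_le_rpow_mul_rpow hlam _ _
    _ ≤ h z := hfgh x y z hzx hzy

theorem GeomMeanLE.indicator {f g h : Z → ℝ≥0∞} (hfgh : GeomMeanLE d lam f g h)
    (hlam : lam ∈ Ioo (0 : ℝ) 1) {A B C : Set Z} (hABC : starComb d lam A B ⊆ C) :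
    GeomMeanLE d lam (A.indicator f) (B.indicator g) (C.indicator h) := by
  intro x y z hzx hzy
  by_cases hx : x ∈ A
  · by_cases hy : y ∈ B
    · have hz : z ∈ C := hABC ⟨x, hx, y, hy, hzx, hzy⟩
      simpa only [indicator_of_mem hx, indicator_of_mem hy, indicator_of_mem hz]
        using hfgh x y z hzx hzy
    · simp [hy, ENNReal.zero_rpow_of_pos hlam.1]
  · simp [hx, ENNReal.zero_rpow_of_pos (sub_pos.2 hlam.2)]

end GeometricMean

section LayerCake

variable {X : Type*} [MeasurableSpace X]

theorem lintegral_eq_lintegral_meas_ofReal_lt (μ : Measure X) {f : X → ℝ≥0∞}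
    (hf : AEMeasurable f μ) :
    ∫⁻ x, f x ∂μ = ∫⁻ t in Ioi (0 : ℝ), μ {x | ENNReal.ofReal t < f x} := by
  by_cases hfin : ∀ᵐ x ∂μ, f x ≠ ∞
  · calc ∫⁻ x, f x ∂μ = ∫⁻ x, ENNReal.ofReal (f x).toReal ∂μ :=
          lintegral_congr_ae (hfin.mono fun x hx => (ENNReal.ofReal_toReal hx).symm)
      _ = ∫⁻ t in Ioi (0 : ℝ), μ {x | t < (f x).toReal} :=
          lintegral_eq_lintegral_meas_lt μ (ae_of_all _ fun _ => ENNReal.toReal_nonneg)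
            hf.ennreal_toReal
      _ = ∫⁻ t in Ioi (0 : ℝ), μ {x | ENNReal.ofReal t < f x} :=
          setLIntegral_congr_fun measurableSet_Ioi fun t (ht : 0 < t) =>
            measure_congr <| hfin.mono fun x hx =>
              propext (ENNReal.ofReal_lt_iff_lt_toReal ht.le hx).symm
  · have measure_top_ne_zero : μ {x | f x = ∞} ≠ 0 := by simpa [ae_iff] using hfin
    have lintegral_top : ∫⁻ x, f x ∂μ = ∞ := by
      by_contra hne
      exact hfin ((ae_lt_top' hf hne).mono fun x hx => hx.ne)
    rw [lintegral_top, eq_comm, eq_top_iff]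
    calc ∞ = ∫⁻ _ in Ioi (0 : ℝ), μ {x | f x = ∞} := by
          rw [setLIntegral_const, Real.volume_Ioi, ENNReal.mul_top measure_top_ne_zero]
      _ ≤ ∫⁻ t in Ioi (0 : ℝ), μ {x | ENNReal.ofReal t < f x} :=
          lintegral_mono fun t => measure_mono fun x (hx : f x = ∞) =>
            ENNReal.ofReal_lt_top.trans_eq hx.symm

theorem measurable_meas_ofReal_lt (μ : Measure X) (f : X → ℝ≥0∞) :
    Measurable fun t : ℝ => μ {x | ENNReal.ofReal t < f x} :=
  Antitone.measurable fun _ _ hst =>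
    measure_mono fun _ hx => (ENNReal.ofReal_le_ofReal hst).trans_lt hx

end LayerCake

section LinearInequality

variable {X : Type*} [MeasurableSpace X] {d : X → X → ℝ} {μ : Measure X} {lam : ℝ}
  {f g h : X → ℝ≥0∞}

theorem SatisfiesBMbarLinear.add_measure_superlevel_le_of_iSup_eq (hμ : SatisfiesBMbarLinear d μ)
    (hlam : lam ∈ Ioo (0 : ℝ) 1) (hf : Measurable f) (hg : Measurable g) (hh : Measurable h)
    (hfgh : GeomMeanLE d lam f g h) (hsup : ⨆ x, f x = ⨆ x, g x) (t : ℝ≥0∞) :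
    ENNReal.ofReal (1 - lam) * μ {x | t < f x} + ENNReal.ofReal lam * μ {x | t < g x}
      ≤ μ {x | t < h x} := by
  by_cases ht : t < ⨆ x, f x
  · have hf_nonempty : {x | t < f x}.Nonempty := lt_iSup_iff.1 ht
    have hg_nonempty : {x | t < g x}.Nonempty := lt_iSup_iff.1 (ht.trans_eq hsup)
    exact hμ lam hlam _ _ _ hf_nonempty hg_nonempty
      (measurableSet_lt measurable_const hf) (measurableSet_lt measurable_const hg)
      (measurableSet_lt measurable_const hh)
      (hfgh.starComb_superlevel_subset (Ioo_subset_Icc_self hlam) t)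
  · have hf_le : ∀ x, f x ≤ t := iSup_le_iff.1 (not_lt.1 ht)
    have hg_le : ∀ x, g x ≤ t := iSup_le_iff.1 (hsup.symm.trans_le (not_lt.1 ht))
    simp [(hf_le _).not_gt, (hg_le _).not_gt]

theorem SatisfiesBMbarLinear.add_lintegral_le_of_iSup_eq (hμ : SatisfiesBMbarLinear d μ)
    (hlam : lam ∈ Ioo (0 : ℝ) 1) (hf : Measurable f) (hg : Measurable g) (hh : Measurable h)
    (hfgh : GeomMeanLE d lam f g h) (hsup : ⨆ x, f x = ⨆ x, g x) :
    ENNReal.ofReal (1 - lam) * ∫⁻ x, f x ∂μ + ENNReal.ofReal lam * ∫⁻ x, g x ∂μ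
      ≤ ∫⁻ x, h x ∂μ := by
  have measurable_f := measurable_meas_ofReal_lt μ f
  rw [lintegral_eq_lintegral_meas_ofReal_lt μ hf.aemeasurable,
    lintegral_eq_lintegral_meas_ofReal_lt μ hg.aemeasurable,
    lintegral_eq_lintegral_meas_ofReal_lt μ hh.aemeasurable,
    ← lintegral_const_mul _ measurable_f,
    ← lintegral_const_mul _ (measurable_meas_ofReal_lt μ g),
    ← lintegral_add_left (measurable_f.const_mul _)]
  exact lintegral_mono fun t =>
    hμ.add_measure_superlevel_le_of_iSup_eq hlam hf hg hh hfgh hsup (ENNReal.ofReal t)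

end LinearInequality

section Product

variable {X Y : Type*}

theorem rho_eq_mul_rho_s2 [PseudoMetricSpace X] [PseudoMetricSpace Y] {c : ℝ} (hc : 0 ≤ c)
    {p q a b : X × Y} (hfst : dist p.1 q.1 = c * dist a.1 b.1)
    (hsnd : dist p.2 q.2 = c * dist a.2 b.2) : rho p q = c * rho a b := by
  unfold rho
  rw [hfst, hsnd, mul_pow, mul_pow, ← mul_add, Real.sqrt_mul (sq_nonneg c), Real.sqrt_sq hc]

theorem GeomMeanLE.section_snd [PseudoMetricSpace X] [PseudoMetricSpace Y] {lam : ℝ}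
    {f g h : X × Y → ℝ≥0∞} (hfgh : GeomMeanLE rho lam f g h) (hlam : lam ∈ Icc (0 : ℝ) 1)
    {x₁ x₂ z : X} (hz₁ : dist z x₁ = lam * dist x₁ x₂)
    (hz₂ : dist z x₂ = (1 - lam) * dist x₁ x₂) :
    GeomMeanLE dist lam (fun y => f (x₁, y)) (fun y => g (x₂, y)) fun y => h (z, y) :=
  fun y₁ y₂ w hw₁ hw₂ => hfgh (x₁, y₁) (x₂, y₂) (z, w)
    (rho_eq_mul_rho_s2 hlam.1 hz₁ hw₁) (rho_eq_mul_rho_s2 (sub_nonneg.2 hlam.2) hz₂ hw₂)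

theorem SatisfiesPL.geomMeanLE_lintegral_snd [PseudoMetricSpace X] [PseudoMetricSpace Y]
    [MeasurableSpace X] [MeasurableSpace Y] {ν : Measure Y}
    (hν : SatisfiesPL (dist : Y → Y → ℝ) ν) {lam : ℝ} (hlam : lam ∈ Ioo (0 : ℝ) 1)
    {f g h : X × Y → ℝ≥0∞} (hf : Measurable f) (hg : Measurable g) (hh : Measurable h)
    (hfgh : GeomMeanLE rho lam f g h) :
    GeomMeanLE dist lam (fun x => ∫⁻ y, f (x, y) ∂ν) (fun x => ∫⁻ y, g (x, y) ∂ν)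
      fun x => ∫⁻ y, h (x, y) ∂ν :=
  fun _ _ _ hz₁ hz₂ => hν lam hlam _ _ _ (hf.comp measurable_prodMk_left)
    (hg.comp measurable_prodMk_left) (hh.comp measurable_prodMk_left)
    (hfgh.section_snd (Ioo_subset_Icc_self hlam) hz₁ hz₂)

variable [MeasurableSpace X] [MeasurableSpace Y]

theorem setLIntegral_section_eq_lintegral_indicator (ν : Measure Y) (φ : X × Y → ℝ≥0∞)
    {S : Set (X × Y)} (hS : MeasurableSet S) (x : X) :
    ∫⁻ y in {y | (x, y) ∈ S}, φ (x, y) ∂ν = ∫⁻ y, S.indicator φ (x, y) ∂ν :=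
  (lintegral_indicator (measurable_prodMk_left hS) fun y => φ (x, y)).symm

theorem withDensity_prod_apply_eq_lintegral_lintegral (μ : Measure X) (ν : Measure Y) [SFinite ν]
    {φ : X × Y → ℝ≥0∞} (hφ : Measurable φ) {S : Set (X × Y)} (hS : MeasurableSet S) :
    (μ.prod ν).withDensity φ S = ∫⁻ x, ∫⁻ y, S.indicator φ (x, y) ∂ν ∂μ := by
  rw [withDensity_apply _ hS, ← lintegral_indicator hS,
    lintegral_prod _ (hφ.indicator hS).aemeasurable]

end Product

theorem statement2_general {X Y : Type*} [PseudoMetricSpace X] [PseudoMetricSpace Y]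
    [MeasurableSpace X] [MeasurableSpace Y] (μX : Measure X) (μY : Measure Y) [SFinite μY]
    (hX : SatisfiesBMbarLinear (dist : X → X → ℝ) μX)
    (hYPL : SatisfiesPL (dist : Y → Y → ℝ) μY)
    {φ : X × Y → ℝ≥0∞} (hφ : Measurable φ) {lam : ℝ} (hlam : lam ∈ Ioo (0 : ℝ) 1)
    (hφlc : GeomMeanLE rho lam φ φ φ) {A B C : Set (X × Y)}
    (hA : MeasurableSet A) (hB : MeasurableSet B) (hC : MeasurableSet C)
    (hABC : starComb rho lam A B ⊆ C)
    (hsup : (⨆ x : X, ∫⁻ y in {y : Y | (x, y) ∈ A}, φ (x, y) ∂μY)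
          = ⨆ x : X, ∫⁻ y in {y : Y | (x, y) ∈ B}, φ (x, y) ∂μY) :
    ENNReal.ofReal (1 - lam) * (μX.prod μY).withDensity φ A
        + ENNReal.ofReal lam * (μX.prod μY).withDensity φ B
      ≤ (μX.prod μY).withDensity φ C := by
  have hφA := hφ.indicator hA
  have hφB := hφ.indicator hB
  have hφC := hφ.indicator hC
  have section_geomMeanLE := hYPL.geomMeanLE_lintegral_snd hlam hφA hφB hφC
    (hφlc.indicator hlam hABC)
  simp only [setLIntegral_section_eq_lintegral_indicator μY φ hA,
    setLIntegral_section_eq_lintegral_indicator μY φ hB] at hsup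
  simp only [withDensity_prod_apply_eq_lintegral_lintegral μX μY hφ, hA, hB, hC]
  exact hX.add_lintegral_le_of_iSup_eq hlam hφA.lintegral_prod_right' hφB.lintegral_prod_right'
    hφC.lintegral_prod_right' section_geomMeanLE hsup

/-- Theorem C / `t:BM_lin1_MetSpa`: linear Brunn–Minkowski inequality on
`X × Y` for a log-concave density, when `X` satisfies `B̄M(1)`, `Y` satisfies `PL`, and the
two sets have equal maximal "marginal" sections. -/
theorem statement2 {X Y : Type*} [MetricSpace X] [MetricSpace Y]
    [MeasurableSpace X] [OpensMeasurableSpace X] [MeasurableSpace Y] [OpensMeasurableSpace Y]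
    (μX : Measure X) (μY : Measure Y) [SigmaFinite μX] [SigmaFinite μY]
    (hdX : StrictlyIntrinsicDist (dist : X → X → ℝ))
    (hdY : StrictlyIntrinsicDist (dist : Y → Y → ℝ))
    (hX : SatisfiesBMbarLinear (dist : X → X → ℝ) μX)
    (hYPL : SatisfiesPL (dist : Y → Y → ℝ) μY)
    (φ : X × Y → ℝ≥0∞) (hφmeas : Measurable φ)
    (hφlc : ∀ lam : ℝ, lam ∈ Ioo (0:ℝ) 1 → ∀ x y z : X × Y,
      rho z x = lam * rho x y → rho z y = (1 - lam) * rho x y →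
      φ x ^ (1 - lam) * φ y ^ lam ≤ φ z)
    (μ : Measure (X × Y)) (hμ : μ = (μX.prod μY).withDensity φ)
    (lam : ℝ) (hlam : lam ∈ Ioo (0:ℝ) 1)
    (A B : Set (X × Y)) (hA : A.Nonempty) (hB : B.Nonempty)
    (hAm : MeasurableSet A) (hBm : MeasurableSet B)
    (hCm : MeasurableSet (starComb (rho : X × Y → X × Y → ℝ) lam A B))
    (hsup : (⨆ x : X, ∫⁻ y in {y : Y | (x, y) ∈ A}, φ (x, y) ∂μY)
          = ⨆ x : X, ∫⁻ y in {y : Y | (x, y) ∈ B}, φ (x, y) ∂μY) :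
    ENNReal.ofReal (1 - lam) * μ A + ENNReal.ofReal lam * μ B
      ≤ μ (starComb (rho : X × Y → X × Y → ℝ) lam A B) := by
  subst hμ
  exact statement2_general μX μY hX hYPL hφmeas hlam (hφlc lam hlam) hAm hBm hCm Subset.rfl hsup

end
end

section
/- Let (X,d_X) and (Y,d_Y) be metric spaces and let ρ be the product metric on X×Y. For all non-empty A,B⊆X×Y and λ∈(0,1), the ρ-convex combination (1−λ)A⋆_ρλB equals the set of all z=(z₁,z₂)∈X×Y for which there exist (a₁,a₂)∈A and (b₁,b₂)∈B with d_X(z₁,a₁)=λ·d_X(a₁,b₁), d_X(z₁,b₁)=(1−λ)·d_X(a₁,b₁), d_Y(z₂,a₂)=λ·d_Y(a₂,b₂) and d_Y(z₂,b₂)=(1−λ)·d_Y(a₂,b₂). -/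
open MeasureTheory Set Metric Filter
open scoped ENNReal NNReal Topology Pointwise

noncomputable section

/-!
Record the coordinate distances of two points of `X × Y` as a vector of the Euclidean plane, so
that `rho` is its norm. If `u`, `v`, `w` are the vectors of the pairs `(z, a)`, `(z, b)`, `(a, b)`,
then `w ≤ u + v` coordinatewise by the triangle inequality, so `‖w‖² ≤ ⟪u, w⟫ + ⟪v, w⟫`. When
`‖u‖ = λ‖w‖` and `‖v‖ = (1 - λ)‖w‖`, Cauchy–Schwarz bounds the two terms by `λ‖w‖²` and
`(1 - λ)‖w‖²`, so equality holds throughout and `u = λw`, `v = (1 - λ)w`.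
-/

open scoped RealInnerProductSpace

section InnerProduct

variable {E : Type*} [NormedAddCommGroup E] [InnerProductSpace ℝ E] {u v w : E} {c : ℝ}

theorem inner_le_mul_norm_sq_of_norm_eq (hu : ‖u‖ = c * ‖w‖) : ⟪u, w⟫ ≤ c * ‖w‖ ^ 2 :=
  calc ⟪u, w⟫ ≤ ‖u‖ * ‖w‖ := real_inner_le_norm u w
    _ = c * ‖w‖ ^ 2 := by rw [hu]; ring

theorem eq_smul_of_norm_eq_of_inner_eq (hu : ‖u‖ = c * ‖w‖) (huw : ⟪u, w⟫ = c * ‖w‖ ^ 2) :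
    u = c • w := by
  have norm_sub_sq_eq_zero : ‖u - c • w‖ ^ 2 = 0 := by
    rw [norm_sub_sq_real, real_inner_smul_right, huw, hu, norm_smul, mul_pow ‖c‖,
      Real.norm_eq_abs, sq_abs]
    ring
  exact sub_eq_zero.mp (norm_eq_zero.mp (pow_eq_zero_iff two_ne_zero |>.mp norm_sub_sq_eq_zero))

theorem norm_smul_eq_mul_norm_of_inner_nonneg (h : 0 ≤ ⟪c • w, w⟫) : ‖c • w‖ = c * ‖w‖ := by
  rw [real_inner_smul_left, real_inner_self_eq_norm_sq] at h
  rcases (norm_nonneg w).eq_or_lt with hw | hw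
  · rw [norm_smul, ← hw, mul_zero, mul_zero]
  · rw [norm_smul, Real.norm_of_nonneg (nonneg_of_mul_nonneg_left h (pow_pos hw 2))]

theorem norm_eq_mul_norm_and_iff_eq_smul_and (hu : 0 ≤ ⟪u, w⟫) (hv : 0 ≤ ⟪v, w⟫)
    (hw : ‖w‖ ^ 2 ≤ ⟪u, w⟫ + ⟪v, w⟫) :
    ‖u‖ = c * ‖w‖ ∧ ‖v‖ = (1 - c) * ‖w‖ ↔ u = c • w ∧ v = (1 - c) • w := by
  constructor
  · rintro ⟨norm_u, norm_v⟩
    have inner_u_le : ⟪u, w⟫ ≤ c * ‖w‖ ^ 2 := inner_le_mul_norm_sq_of_norm_eq norm_u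
    have inner_v_le : ⟪v, w⟫ ≤ (1 - c) * ‖w‖ ^ 2 := inner_le_mul_norm_sq_of_norm_eq norm_v
    exact ⟨eq_smul_of_norm_eq_of_inner_eq norm_u (by linarith),
      eq_smul_of_norm_eq_of_inner_eq norm_v (by linarith)⟩
  · rintro ⟨rfl, rfl⟩
    exact ⟨norm_smul_eq_mul_norm_of_inner_nonneg hu, norm_smul_eq_mul_norm_of_inner_nonneg hv⟩

end InnerProduct

section DistVec

variable {X Y : Type*} [PseudoMetricSpace X] [PseudoMetricSpace Y]

/-- The vector of coordinate distances of two points of `X × Y`, in the plane `ℝ × ℝ` with its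
Euclidean norm, so that `rho` becomes a norm and Cauchy–Schwarz applies to it. -/
def distVec (a b : X × Y) : WithLp 2 (ℝ × ℝ) :=
  WithLp.toLp 2 (dist a.1 b.1, dist a.2 b.2)

theorem norm_distVec (a b : X × Y) : ‖distVec a b‖ = rho a b := by
  simp [distVec, rho, WithLp.prod_norm_eq_of_L2]

theorem inner_distVec (a b a' b' : X × Y) :
    ⟪distVec a b, distVec a' b'⟫ =
      dist a.1 b.1 * dist a'.1 b'.1 + dist a.2 b.2 * dist a'.2 b'.2 := by
  simp [distVec, mul_comm]

theorem inner_distVec_nonneg (a b a' b' : X × Y) : 0 ≤ ⟪distVec a b, distVec a' b'⟫ := by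
  rw [inner_distVec]
  positivity

theorem norm_distVec_sq_le_inner_add_inner (z a b : X × Y) :
    ‖distVec a b‖ ^ 2 ≤ ⟪distVec z a, distVec a b⟫ + ⟪distVec z b, distVec a b⟫ := by
  calc ‖distVec a b‖ ^ 2 = dist a.1 b.1 * dist a.1 b.1 + dist a.2 b.2 * dist a.2 b.2 := by
        rw [← real_inner_self_eq_norm_sq, inner_distVec]
    _ ≤ (dist z.1 a.1 + dist z.1 b.1) * dist a.1 b.1 +
        (dist z.2 a.2 + dist z.2 b.2) * dist a.2 b.2 := by
        gcongr <;> exact dist_triangle_left _ _ _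
    _ = ⟪distVec z a, distVec a b⟫ + ⟪distVec z b, distVec a b⟫ := by
        rw [inner_distVec, inner_distVec]
        ring

theorem distVec_eq_smul_distVec_iff (a b a' b' : X × Y) (c : ℝ) :
    distVec a b = c • distVec a' b' ↔
      dist a.1 b.1 = c * dist a'.1 b'.1 ∧ dist a.2 b.2 = c * dist a'.2 b'.2 := by
  simp [distVec, ← WithLp.toLp_smul]

theorem rho_eq_mul_rho_and_iff (z a b : X × Y) (c : ℝ) :
    rho z a = c * rho a b ∧ rho z b = (1 - c) * rho a b ↔
      dist z.1 a.1 = c * dist a.1 b.1 ∧ dist z.1 b.1 = (1 - c) * dist a.1 b.1 ∧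
      dist z.2 a.2 = c * dist a.2 b.2 ∧ dist z.2 b.2 = (1 - c) * dist a.2 b.2 := by
  rw [← norm_distVec, ← norm_distVec, ← norm_distVec,
    norm_eq_mul_norm_and_iff_eq_smul_and (inner_distVec_nonneg z a a b)
      (inner_distVec_nonneg z b a b) (norm_distVec_sq_le_inner_add_inner z a b),
    distVec_eq_smul_distVec_iff, distVec_eq_smul_distVec_iff]
  tauto

end DistVec

theorem statement5_general {X Y : Type*} [PseudoMetricSpace X] [PseudoMetricSpace Y]
    (lam : ℝ) (A B : Set (X × Y)) :
    starComb (rho : X × Y → X × Y → ℝ) lam A B =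
      {z : X × Y | ∃ a ∈ A, ∃ b ∈ B,
        dist z.1 a.1 = lam * dist a.1 b.1 ∧ dist z.1 b.1 = (1 - lam) * dist a.1 b.1 ∧
        dist z.2 a.2 = lam * dist a.2 b.2 ∧ dist z.2 b.2 = (1 - lam) * dist a.2 b.2} := by
  simp only [starComb, rho_eq_mul_rho_and_iff]

/-- Proposition `p:starProdSpac`: the `ρ`-convex combination on a product
of metric spaces coincides with the componentwise convex combination. -/
theorem statement5 {X Y : Type*} [MetricSpace X] [MetricSpace Y]
    (lam : ℝ) (hlam : lam ∈ Ioo (0:ℝ) 1)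
    (A B : Set (X × Y)) (hA : A.Nonempty) (hB : B.Nonempty) :
    starComb (rho : X × Y → X × Y → ℝ) lam A B =
      {z : X × Y | ∃ a ∈ A, ∃ b ∈ B,
        dist z.1 a.1 = lam * dist a.1 b.1 ∧ dist z.1 b.1 = (1 - lam) * dist a.1 b.1 ∧
        dist z.2 a.2 = lam * dist a.2 b.2 ∧ dist z.2 b.2 = (1 - lam) * dist a.2 b.2} :=
  statement5_general lam A B

end
end
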